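/- In the transfer-operator setting below, let μ be an integer with 2^{−μ+6}‖ξ‖ ≤ ‖(DS_x)^{tr}ξ‖ ≤ 2^{μ−6}‖ξ‖ for all x ∈ K and ξ ∈ ℝ², and let ν ≤ μ−6 be an integer with 2^{ν−1} < Λ(S,Θ',K) ≤ 2^ν. Write (m,τ) ↪ (n,σ) if either (τ,σ) = (+,+) and m−μ ≤ n ≤ max{0, m+ν+6}, or (τ,σ) ∈ {(−,−),(+,−)} and m−μ ≤ n ≤ m+μ. Then there exists a constant C such that for all u ∈ C^r(R), all n, m ≥ 0 and all σ, τ ∈ {+,−} with (m,τ) ↪̸ (n,σ): ‖ψ_{Θ',n,σ}(D)(L(u_{Θ,m,τ}))‖_{L²} ≤ C·2^{−(r−1)·max{m,n}}·‖u_{Θ,m,τ}‖_{L²}. -/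

import Mathlib

noncomputable section
open MeasureTheory Filter Finset Function Set Real Topology
open scoped ENNReal NNReal

namespace AngleMult

/-! ### Anisotropic Sobolev norms on `ℝ²` -/

/-- Euclidean magnitude on `ℝ × ℝ`. -/
def en (v : ℝ × ℝ) : ℝ := Real.sqrt (v.1 ^ 2 + v.2 ^ 2)

/-- Fourier transform on `ℝ²`. -/
def FT (u : ℝ × ℝ → ℂ) (ξ : ℝ × ℝ) : ℂ :=
  ∫ x : ℝ × ℝ, Complex.exp (-(2 * Real.pi * (x.1 * ξ.1 + x.2 * ξ.2)) * Complex.I) * u x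

/-- Inverse Fourier transform on `ℝ²`. -/
def invFT (u : ℝ × ℝ → ℂ) (x : ℝ × ℝ) : ℂ :=
  ∫ ξ : ℝ × ℝ, Complex.exp ((2 * Real.pi * (x.1 * ξ.1 + x.2 * ξ.2)) * Complex.I) * u ξ

/-- The rectangle `R = (-η,η) × (δ,2δ)`. -/
def Rset (η δ : ℝ) : Set (ℝ × ℝ) := Set.Ioo (-η) η ×ˢ Set.Ioo δ (2 * δ)

/-- The rectangle `Q = (-2η,2η) × (0,3δ)`. -/
def Qset (η δ : ℝ) : Set (ℝ × ℝ) := Set.Ioo (-(2 * η)) (2 * η) ×ˢ Set.Ioo 0 (3 * δ)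

/-- `C ⋐ C'`: the closure of `C` is contained in the interior of `C'` except for the
origin. -/
def Csub (C C' : Set (ℝ × ℝ)) : Prop := closure C \ {0} ⊆ interior C'

/-- A polarization `Θ = (C₊, C₋, φ₊, φ₋)`: a pair of closed cones intersecting only at `0`
together with smooth functions on the unit circle (encoded as positively homogeneous
functions of degree `0` on `ℝ² ∖ {0}`) adapted to them. -/
structure Polarization where
  Cp : Set (ℝ × ℝ)
  Cm : Set (ℝ × ℝ)
  phip : ℝ × ℝ → ℝ
  phim : ℝ × ℝ → ℝ
  closed_p : IsClosed Cp
  closed_m : IsClosed Cm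
  cone_p : ∀ (c : ℝ) v, v ∈ Cp → c • v ∈ Cp
  cone_m : ∀ (c : ℝ) v, v ∈ Cm → c • v ∈ Cm
  inter_eq : Cp ∩ Cm = {0}
  smooth_p : ContDiffOn ℝ (⊤ : ℕ∞) phip {v : ℝ × ℝ | v ≠ 0}
  smooth_m : ContDiffOn ℝ (⊤ : ℕ∞) phim {v : ℝ × ℝ | v ≠ 0}
  homog_p : ∀ c : ℝ, 0 < c → ∀ v, phip (c • v) = phip v
  mem_Icc_p : ∀ v, phip v ∈ Set.Icc (0 : ℝ) 1
  one_on_p : ∀ v ∈ Cp, v ≠ 0 → phip v = 1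
  zero_on_m : ∀ v ∈ Cm, v ≠ 0 → phip v = 0
  phim_def : ∀ v, phim v = 1 - phip v

/-- The order `Θ < Θ'` on polarizations: `ℝ² ∖ C'₊ ⋐ C₋`. -/
def PolLt (Θ Θ' : Polarization) : Prop := Csub (Set.univ \ Θ'.Cp) Θ.Cm

/-- Admissibility of the fixed bump function `χ`. -/
def ChiOK (χ : ℝ → ℝ) : Prop :=
  ContDiff ℝ (⊤ : ℕ∞) χ ∧ (∀ s ≤ (1 : ℝ), χ s = 1) ∧ (∀ s, (2 : ℝ) ≤ s → χ s = 0) ∧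
    ∀ s, χ s ∈ Set.Icc (0 : ℝ) 1

/-- The Littlewood-Paley functions `ψ_{Θ,n,σ}` (`σ = true` is `+`, `σ = false` is `-`). -/
def psiLP (χ : ℝ → ℝ) (Θ : Polarization) (n : ℕ) (σ : Bool) (ξ : ℝ × ℝ) : ℝ :=
  if n = 0 then χ (en ξ) / 2
  else (if σ then Θ.phip ξ else Θ.phim ξ) *
    (χ ((2 : ℝ) ^ (-(n : ℤ)) * en ξ) - χ ((2 : ℝ) ^ (-(n : ℤ) + 1) * en ξ))

/-- The pseudo-differential operator `ψ_{Θ,n,σ}(D) u = 𝓕⁻¹(ψ_{Θ,n,σ} · 𝓕u)`. -/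
def psiD (χ : ℝ → ℝ) (Θ : Polarization) (n : ℕ) (σ : Bool) (u : ℝ × ℝ → ℂ) :
    ℝ × ℝ → ℂ :=
  invFT fun ξ => (psiLP χ Θ n σ ξ : ℂ) * FT u ξ

/-- The partial norm `‖u‖^σ_{Θ,p} = (∑_n 2^{2pn} ‖ψ_{Θ,n,σ}·𝓕u‖²_{L²})^{1/2}`
(`ℝ≥0∞`-valued). -/
def segNorm (χ : ℝ → ℝ) (Θ : Polarization) (p : ℝ) (σ : Bool) (u : ℝ × ℝ → ℂ) : ℝ≥0∞ :=
  (∑' n : ℕ, ENNReal.ofReal ((2 : ℝ) ^ (2 * p * (n : ℝ))) *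
      (eLpNorm (fun ξ => (psiLP χ Θ n σ ξ : ℂ) * FT u ξ) 2 volume) ^ 2) ^ (1 / 2 : ℝ)

/-- The anisotropic Sobolev norm `‖u‖_{Θ,p,q}`. -/
def anorm (χ : ℝ → ℝ) (Θ : Polarization) (p q : ℝ) (u : ℝ × ℝ → ℂ) : ℝ≥0∞ :=
  ((segNorm χ Θ p true u) ^ 2 + (segNorm χ Θ q false u) ^ 2) ^ (1 / 2 : ℝ)

/-- The (usual) Sobolev norm of order `s` of `u`, via the Fourier transform. -/
def wnorm (s : ℝ) (u : ℝ × ℝ → ℂ) : ℝ≥0∞ :=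
  eLpNorm (fun ξ => ((1 + en ξ ^ 2) ^ (s / 2) : ℝ) * FT u ξ) 2 volume

/-- `u ∈ C^r(R)`: a `C^r` function supported in `R`. -/
def CrSupp (r : ℕ) (η δ : ℝ) (u : ℝ × ℝ → ℂ) : Prop :=
  ContDiff ℝ r u ∧ Function.support u ⊆ Rset η δ

/-- `u ∈ C^∞(R)`: a `C^∞` function supported in `R`. -/
def SmoothSupp (η δ : ℝ) (u : ℝ × ℝ → ℂ) : Prop :=
  ContDiff ℝ (⊤ : ℕ∞) u ∧ Function.support u ⊆ Rset η δ

/-! ### Transfer operators on local charts -/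

/-- The transpose `Aᵀ` (for the Euclidean structure) of a linear map on `ℝ²`. -/
def transApp (A : (ℝ × ℝ) →L[ℝ] (ℝ × ℝ)) (v : ℝ × ℝ) : ℝ × ℝ :=
  ((A (1, 0)).1 * v.1 + (A (1, 0)).2 * v.2, (A (0, 1)).1 * v.1 + (A (0, 1)).2 * v.2)

/-- The determinant of a linear map on `ℝ²`. -/
def det2 (A : (ℝ × ℝ) →L[ℝ] (ℝ × ℝ)) : ℝ :=
  (A (1, 0)).1 * (A (0, 1)).2 - (A (1, 0)).2 * (A (0, 1)).1

/-- The transfer operator `L u = h · (u ∘ S)` on `K`, `0` elsewhere. -/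
def Lop (K : Set (ℝ × ℝ)) (h : ℝ × ℝ → ℝ) (S : ℝ × ℝ → ℝ × ℝ) (u : ℝ × ℝ → ℂ) :
    ℝ × ℝ → ℂ :=
  K.indicator fun x => (h x : ℂ) * u (S x)

/-- The hypotheses of the transfer-operator setting: `K ⊂ R` closed, `h` a `C^{r-1}`
function supported in `K`, `S` a `C^r` diffeomorphism onto its image defined on a
neighborhood `U` of `K`, with `(DS_ζ)ᵀ(ℝ² ∖ C₊) ⋐ C'₋` for all `ζ ∈ K`. -/
def TransferHyp (r : ℕ) (η δ : ℝ) (Θ Θ' : Polarization) (K : Set (ℝ × ℝ))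
    (h : ℝ × ℝ → ℝ) (S : ℝ × ℝ → ℝ × ℝ) : Prop :=
  IsClosed K ∧ K ⊆ Rset η δ ∧
  ContDiff ℝ (r - 1 : ℕ) h ∧ Function.support h ⊆ K ∧
  (∃ U : Set (ℝ × ℝ), IsOpen U ∧ K ⊆ U ∧ ContDiffOn ℝ r S U ∧ Set.InjOn S U ∧
    ∀ ζ ∈ U, det2 (fderiv ℝ S ζ) ≠ 0) ∧
  ∀ ζ ∈ K, Csub (transApp (fderiv ℝ S ζ) '' (Set.univ \ Θ.Cp)) Θ'.Cm

/-- `γ(S) = min_{ζ ∈ K} |det DS_ζ|`. -/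
def gammaS (K : Set (ℝ × ℝ)) (S : ℝ × ℝ → ℝ × ℝ) : ℝ :=
  sInf {c : ℝ | ∃ ζ ∈ K, c = |det2 (fderiv ℝ S ζ)|}

/-- `Λ(S,Θ',K) = sup{‖(DS_ζ)ᵀ v‖/‖v‖ : ζ ∈ K, (DS_ζ)ᵀ v ∉ C'₋}`. -/
def LambdaS (K : Set (ℝ × ℝ)) (S : ℝ × ℝ → ℝ × ℝ) (Θ' : Polarization) : ℝ :=
  sSup {c : ℝ | ∃ ζ ∈ K, ∃ v : ℝ × ℝ,
    transApp (fderiv ℝ S ζ) v ∉ Θ'.Cm ∧ c = en (transApp (fderiv ℝ S ζ) v) / en v}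

/-- `‖h‖_{L^∞}`. -/
def supNorm (h : ℝ × ℝ → ℝ) : ℝ := sSup {c : ℝ | ∃ x, c = |h x|}

/-- The relation `(m,τ) ↪ (n,σ)` of Appendix B. -/
def Hook (μ ν : ℤ) (m : ℕ) (τ : Bool) (n : ℕ) (σ : Bool) : Prop :=
  (τ = true ∧ σ = true ∧ (m : ℤ) - μ ≤ (n : ℤ) ∧ (n : ℤ) ≤ max 0 ((m : ℤ) + ν + 6)) ∨
  (σ = false ∧ (m : ℤ) - μ ≤ (n : ℤ) ∧ (n : ℤ) ≤ (m : ℤ) + μ)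

section helpers
open scoped FourierTransform SchwartzMap

lemma plancherelE {E : Type*} [NormedAddCommGroup E] [InnerProductSpace ℝ E] [FiniteDimensional ℝ E] [MeasurableSpace E] [BorelSpace E] (f : E → ℂ) (h1 : Integrable f volume) (h2 : MemLp f 2 volume) :
   𝓕⁻ f =ᵐ[volume] (𝓕⁻ (h2.toLp f) : Lp ℂ 2 (volume : Measure E)) := by
  have hcont : Continuous (𝓕⁻ f) := by
    rw [Real.fourierInv_eq_fourier_comp_neg]
    exact VectorFourier.fourierIntegral_continuous Real.continuous_fourierChar (by exact continuous_inner) h1.comp_neg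
  apply ae_eq_of_integral_contDiff_smul_eq
  · exact hcont.locallyIntegrable
  · exact (Lp.memLp _).locallyIntegrable (by norm_num)
  · intro g hg hg'
    have hg₁ : HasCompactSupport (fun x => (g x : ℂ)) := hg'.comp_left (g := fun x : ℝ => (x:ℂ)) (by simp)
    have hg₂ : ContDiff ℝ (⊤ : ℕ∞) (fun x => (g x : ℂ)) := Complex.ofRealCLM.contDiff.comp hg
    have key := Lp.fourierInv_toTemperedDistribution_eq (h2.toLp f)
    have key2 := congrArg (fun T => T (hg₁.toSchwartzMap hg₂)) key
    simp only [TemperedDistribution.fourierInv_apply, Lp.toTemperedDistribution_apply] at key2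
    have e1 : ∫ x, (g x) • (𝓕⁻ (h2.toLp f) : Lp ℂ 2 (volume : Measure E)) x = ∫ x, (hg₁.toSchwartzMap hg₂) x • (𝓕⁻ (h2.toLp f) : Lp ℂ 2 (volume : Measure E)) x := by
      congr 
    rw [e1, ← key2]
    have e2 : ∫ x, (𝓕⁻ (hg₁.toSchwartzMap hg₂)) x • (h2.toLp f) x = ∫ x, (𝓕⁻ (hg₁.toSchwartzMap hg₂)) x • f x := by
      apply integral_congr_ae
      filter_upwards [h2.coeFn_toLp] with x hx
      rw [hx]
    rw [e2]
    have h := VectorFourier.integral_fourierIntegral_smul_eq_flip (μ := (volume : Measure E)) (ν := (volume : Measure E)) (e := Real.fourierChar) (L := -innerₗ E) (f := fun x => (g x : ℂ)) (g := f) Real.continuous_fourierChar (by simpa using! continuous_inner.neg)  ((hg₁.toSchwartzMap hg₂).integrable) h1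
    rw [SchwartzMap.fourierInv_coe]
    have hfl : (-innerₗ E).flip = -innerₗ E := by
      ext x y; simp [real_inner_comm]
    rw [hfl] at h
    exact h.symm

lemma eLpNorm_fourierInv {E : Type*} [NormedAddCommGroup E] [InnerProductSpace ℝ E] [FiniteDimensional ℝ E] [MeasurableSpace E] [BorelSpace E] (f : E → ℂ) (h1 : Integrable f volume) (h2 : MemLp f 2 volume) :
   eLpNorm (𝓕⁻ f) 2 volume = eLpNorm f 2 volume := by
  rw [eLpNorm_congr_ae (plancherelE f h1 h2), ← eLpNorm_congr_ae h2.coeFn_toLp]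
  have : ‖(𝓕⁻ (h2.toLp f) : Lp ℂ 2 (volume : Measure E))‖ = ‖h2.toLp f‖ := 
    (Lp.fourierTransformₗᵢ E ℂ).symm.norm_map _
  rw [Lp.norm_def, Lp.norm_def] at this
  exact (ENNReal.toReal_eq_toReal_iff' (Lp.eLpNorm_ne_top _) (Lp.eLpNorm_ne_top _)).1 this

lemma eLpNorm_invFT (f : ℝ × ℝ → ℂ) (h1 : Integrable f volume) (h2 : MemLp f 2 volume) :
   eLpNorm (invFT f) 2 volume = eLpNorm f 2 volume := by
  have mp := WithLp.volume_preserving_ofLp ℝ ℝ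
  have mp' := WithLp.volume_preserving_toLp ℝ ℝ
  have e1 : ∀ x, invFT f x = 𝓕⁻ (f ∘ (WithLp.ofLp : WithLp 2 (ℝ × ℝ) → ℝ × ℝ)) (WithLp.toLp 2 x) := by
    intro x
    rw [Real.fourierInv_eq', invFT]
    rw [← mp'.integral_comp (MeasurableEquiv.toLp 2 (ℝ × ℝ)).measurableEmbedding]
    congr 1
    ext ξ
    simp [WithLp.prod_inner_apply]
    
  have : invFT f = 𝓕⁻ (f ∘ (WithLp.ofLp : WithLp 2 (ℝ × ℝ) → ℝ × ℝ)) ∘ WithLp.toLp 2 := funext e1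
  have h1' : Integrable (f ∘ (WithLp.ofLp : WithLp 2 (ℝ × ℝ) → ℝ × ℝ)) volume := mp.integrable_comp_of_integrable h1
  have h2' : MemLp (f ∘ (WithLp.ofLp : WithLp 2 (ℝ × ℝ) → ℝ × ℝ)) 2 volume := h2.comp_measurePreserving mp
  have hcont : Continuous (𝓕⁻ (f ∘ (WithLp.ofLp : WithLp 2 (ℝ × ℝ) → ℝ × ℝ))) := by
    rw [Real.fourierInv_eq_fourier_comp_neg]
    exact VectorFourier.fourierIntegral_continuous Real.continuous_fourierChar (by exact continuous_inner) h1'.comp_neg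
  rw [this, eLpNorm_comp_measurePreserving hcont.aestronglyMeasurable mp', eLpNorm_fourierInv _ h1' h2', eLpNorm_comp_measurePreserving h2.1 mp]

/-- real `L²` norm -/
def nrm (f : ℝ × ℝ → ℂ) : ℝ := (eLpNorm f 2 volume).toReal

/-- square integrable with bounded support -/
structure Good (f : ℝ × ℝ → ℂ) : Prop where
  memLp : MemLp f 2 volume
  bdd : ∃ R : ℝ, ∀ ξ, f ξ ≠ 0 → ‖ξ‖ ≤ R

lemma nrm_nonneg (f : ℝ × ℝ → ℂ) : 0 ≤ nrm f := ENNReal.toReal_nonneg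

lemma Good.integrable {f : ℝ × ℝ → ℂ} (hf : Good f) : Integrable f volume := by
  obtain ⟨R, hR⟩ := hf.bdd
  have : IntegrableOn f (Metric.closedBall 0 R) volume := by
    have : IsFiniteMeasure ((volume : Measure (ℝ × ℝ)).restrict (Metric.closedBall 0 R)) :=
      ⟨by simpa using measure_closedBall_lt_top⟩
    exact (hf.memLp.restrict _).integrable (by norm_num)
  rw [← integrableOn_iff_integrable_of_support_subset (s := Metric.closedBall 0 R)]
  · exact this
  · intro ξ hξ
    simpa using hR ξ hξ

lemma Good.mul {f : ℝ × ℝ → ℂ} (hf : Good f) {a : ℝ × ℝ → ℂ} (ha : AEStronglyMeasurable a volume) {c : ℝ}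
    (hac : ∀ ξ, f ξ ≠ 0 → ‖a ξ‖ ≤ c) : Good (fun ξ => a ξ * f ξ) := by
  refine ⟨?_, ?_⟩
  · refine MemLp.of_le_mul (c := c) hf.memLp (ha.mul hf.memLp.1) (Eventually.of_forall fun ξ => ?_)
    by_cases h : f ξ = 0
    · simp [h]
    · rw [norm_mul]
      gcongr
      exact hac ξ h
  · obtain ⟨R, hR⟩ := hf.bdd
    exact ⟨R, fun ξ h => hR ξ (right_ne_zero_of_mul h)⟩

lemma Good.nrm_mul {f : ℝ × ℝ → ℂ} (hf : Good f) {a : ℝ × ℝ → ℂ} {c : ℝ} (hc : 0 ≤ c)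
    (hac : ∀ ξ, f ξ ≠ 0 → ‖a ξ‖ ≤ c) : nrm (fun ξ => a ξ * f ξ) ≤ c * nrm f := by
  have := eLpNorm_le_mul_eLpNorm_of_ae_le_mul (f := fun ξ => a ξ * f ξ) (g := f) (c := c) (μ := volume)
    (Eventually.of_forall fun ξ => by
      by_cases h : f ξ = 0
      · simp [h]
      · rw [norm_mul]
        gcongr
        exact hac ξ h) 2
  unfold nrm
  rw [← ENNReal.toReal_ofReal hc, ← ENNReal.toReal_mul]
  exact ENNReal.toReal_mono (ENNReal.mul_ne_top (by simp) hf.memLp.2.ne) this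

lemma Good.mul_cont {f : ℝ × ℝ → ℂ} (hf : Good f) {a : ℝ × ℝ → ℂ} (ha : Continuous a) :
    Good (fun ξ => a ξ * f ξ) := by
  obtain ⟨R, hR⟩ := hf.bdd
  obtain ⟨c, hc⟩ := (isCompact_closedBall (0 : ℝ × ℝ) R).exists_bound_of_continuousOn ha.continuousOn
  exact hf.mul ha.aestronglyMeasurable (c := c) (fun ξ h => hc ξ (by simpa using hR ξ h))

lemma Good.nrm_invFT {f : ℝ × ℝ → ℂ} (hf : Good f) : nrm (invFT f) = nrm f := by
  rw [nrm, eLpNorm_invFT f hf.integrable hf.memLp, nrm]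

/-- the dot product as a bilinear form -/
def dotB : (ℝ × ℝ) →L[ℝ] (ℝ × ℝ) →L[ℝ] ℝ :=
  (ContinuousLinearMap.fst ℝ ℝ ℝ).smulRight (ContinuousLinearMap.fst ℝ ℝ ℝ) +
  (ContinuousLinearMap.snd ℝ ℝ ℝ).smulRight (ContinuousLinearMap.snd ℝ ℝ ℝ)

lemma dotB_apply (x y : ℝ × ℝ) : dotB x y = x.1 * y.1 + x.2 * y.2 := by
  simp [dotB]

lemma invFT_eq (f : ℝ × ℝ → ℂ) :
    invFT f = VectorFourier.fourierIntegral Real.fourierChar volume (-dotB).toLinearMap₁₂ f := by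
  ext x
  simp only [invFT, VectorFourier.fourierIntegral]
  congr 1
  ext ξ
  rw [Circle.smul_def, Real.fourierChar_apply]
  simp [dotB_apply]
  left
  ring_nf

/-- the gradient of the inverse Fourier transform -/
def gradFT (f : ℝ × ℝ → ℂ) (x : ℝ × ℝ) : (ℝ × ℝ) →L[ℝ] ℂ :=
  (ContinuousLinearMap.fst ℝ ℝ ℝ).smulRight (invFT (fun ξ => (2 * π * Complex.I * ξ.1) * f ξ) x) +
  (ContinuousLinearMap.snd ℝ ℝ ℝ).smulRight (invFT (fun ξ => (2 * π * Complex.I * ξ.2) * f ξ) x)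

lemma invFT_integrand {f : ℝ × ℝ → ℂ} (hf : Integrable f volume) (x : ℝ × ℝ) :
    Integrable (fun ξ => Complex.exp ((2 * Real.pi * (x.1 * ξ.1 + x.2 * ξ.2)) * Complex.I) * f ξ) volume := by
  refine hf.bdd_mul (c := 1) (Continuous.aestronglyMeasurable (by fun_prop)) (Eventually.of_forall fun ξ => ?_)
  rw [show (2 * (Real.pi : ℂ) * (x.1 * ξ.1 + x.2 * ξ.2)) * Complex.I = ((2 * Real.pi * (x.1 * ξ.1 + x.2 * ξ.2) : ℝ) : ℂ) * Complex.I by push_cast; ring]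
  rw [Complex.norm_exp_ofReal_mul_I]

lemma Good.hasFDerivAt {f : ℝ × ℝ → ℂ} (hf : Good f) (x : ℝ × ℝ) :
    HasFDerivAt (invFT f) (gradFT f x) x := by
  rw [invFT_eq]
  have hn : Integrable (fun v : ℝ × ℝ => ‖v‖ * ‖f v‖) volume := by
    have := (hf.mul_cont (a := fun ξ => (‖ξ‖ : ℂ)) (by fun_prop)).integrable.norm
    simpa using this
  have h := VectorFourier.hasFDerivAt_fourierIntegral (-dotB) hf.integrable hn x
  have hIntg : Integrable (VectorFourier.fourierSMulRight (-dotB) f) volume := by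
    refine Integrable.mono' (hn.const_mul (2 * π * ‖-dotB‖)) hf.integrable.1.fourierSMulRight
      (Eventually.of_forall fun v => ?_)
    have := VectorFourier.norm_fourierSMulRight_le (-dotB) f v
    rw [mul_assoc] at this
    exact this
  have ap : ∀ a : ℝ × ℝ, VectorFourier.fourierIntegral 𝐞 volume (-dotB).toLinearMap₁₂
      (VectorFourier.fourierSMulRight (-dotB) f) x a =
      invFT (fun ξ => (2 * π * Complex.I * (ξ.1 * a.1 + ξ.2 * a.2)) * f ξ) x := by
    intro a
    rw [Real.fourierIntegral_continuousLinearMap_apply' hIntg, invFT_eq]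
    congr 1
    ext ξ
    simp [dotB_apply]
    ring
  have : gradFT f x = VectorFourier.fourierIntegral 𝐞 volume (-dotB).toLinearMap₁₂
      (VectorFourier.fourierSMulRight (-dotB) f) x := by
    have a1 := ap (1, 0)
    have a2 := ap (0, 1)
    simp at a1 a2
    ext1 <;> ext1
    · rw [ContinuousLinearMap.comp_apply, ContinuousLinearMap.comp_apply]
      simp [gradFT]
      exact a1.symm
    · rw [ContinuousLinearMap.comp_apply, ContinuousLinearMap.comp_apply]
      simp [gradFT]
      exact a2.symm
  rw [this]
  exact h

lemma Good.continuous {f : ℝ × ℝ → ℂ} (hf : Good f) : Continuous (invFT f) :=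
  continuous_iff_continuousAt.2 fun x => (hf.hasFDerivAt x).continuousAt

lemma Good.memLp_invFT {f : ℝ × ℝ → ℂ} (hf : Good f) : MemLp (invFT f) 2 volume :=
  ⟨hf.continuous.aestronglyMeasurable, by
    rw [eLpNorm_invFT f hf.integrable hf.memLp]; exact hf.memLp.2⟩

lemma invFT_add {f g : ℝ × ℝ → ℂ} (hf : Good f) (hg : Good g) (x : ℝ × ℝ) :
    invFT (fun ξ => f ξ + g ξ) x = invFT f x + invFT g x := by
  unfold invFT
  rw [← integral_add (invFT_integrand hf.integrable x) (invFT_integrand hg.integrable x)]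
  congr 1; ext ξ; ring

lemma invFT_const_mul (f : ℝ × ℝ → ℂ) (c : ℂ) (x : ℝ × ℝ) :
    invFT (fun ξ => c * f ξ) x = c * invFT f x := by
  unfold invFT
  rw [← integral_const_mul]
  congr 1; ext ξ; ring

lemma invFT_sum {ι : Type*} (s : Finset ι) (f : ι → ℝ × ℝ → ℂ) (hf : ∀ i ∈ s, Good (f i)) (x : ℝ × ℝ) :
    invFT (fun ξ => ∑ i ∈ s, f i ξ) x = ∑ i ∈ s, invFT (f i) x := by
  unfold invFT
  rw [← integral_finsetSum _ (fun i hi => invFT_integrand (hf i hi).integrable x)]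
  congr 1; ext ξ; rw [Finset.mul_sum]

/-- multiplication by the recentred frequency -/
def shf (l : Bool) (c : ℝ) (f : ℝ × ℝ → ℂ) (ξ : ℝ × ℝ) : ℂ :=
  (((if l then ξ.1 else ξ.2) - c : ℝ) : ℂ) * f ξ

lemma Good.shf {f : ℝ × ℝ → ℂ} (hf : Good f) (l : Bool) (c : ℝ) : Good (shf l c f) := by
  unfold AngleMult.shf
  refine hf.mul_cont ?_
  cases l <;> simp <;> fun_prop

lemma Good.grad_eq {f : ℝ × ℝ → ℂ} (hf : Good f) (c x v : ℝ × ℝ) :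
    gradFT f x v = 2 * π * Complex.I *
      (v.1 * (invFT (AngleMult.shf true c.1 f) x + c.1 * invFT f x) +
        v.2 * (invFT (AngleMult.shf false c.2 f) x + c.2 * invFT f x)) := by
  have h1 : invFT (fun ξ => (2 * π * Complex.I * ξ.1) * f ξ) x =
      2 * π * Complex.I * (invFT (AngleMult.shf true c.1 f) x + c.1 * invFT f x) := by
    rw [← invFT_const_mul, ← invFT_add (hf.shf _ _) (hf.mul_cont continuous_const), ← invFT_const_mul]
    congr 1
    ext ξ
    simp [AngleMult.shf]
    ring
  have h2 : invFT (fun ξ => (2 * π * Complex.I * ξ.2) * f ξ) x =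
      2 * π * Complex.I * (invFT (AngleMult.shf false c.2 f) x + c.2 * invFT f x) := by
    rw [← invFT_const_mul, ← invFT_add (hf.shf _ _) (hf.mul_cont continuous_const), ← invFT_const_mul]
    congr 1
    ext ξ
    simp [AngleMult.shf]
    ring
  simp only [gradFT, add_apply, ContinuousLinearMap.smulRight_apply, h1, h2]
  simp
  ring

/-- the bilinear form -/
def TT (S : ℝ × ℝ → ℝ × ℝ) (H : ℝ × ℝ → ℝ) (f φ : ℝ × ℝ → ℂ) : ℂ :=
  ∫ w, (H w : ℂ) * invFT f (S w) * invFT φ w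

/-- `C^k` bounds -/
def CB (k : ℕ) (A : ℝ) (H : ℝ × ℝ → ℝ) : Prop :=
  ContDiff ℝ k H ∧ ∀ i ≤ k, ∀ x, ‖iteratedFDeriv ℝ i H x‖ ≤ A

lemma CB.nonneg {k : ℕ} {A : ℝ} {H : ℝ × ℝ → ℝ} (h : CB k A H) : 0 ≤ A :=
  (norm_nonneg _).trans (h.2 0 (Nat.zero_le _) 0)

lemma CB.abs_le {k : ℕ} {A : ℝ} {H : ℝ × ℝ → ℝ} (h : CB k A H) (x : ℝ × ℝ) : |H x| ≤ A := by
  simpa using h.2 0 (Nat.zero_le _) x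

lemma CB.mono {k : ℕ} {A A' : ℝ} {H : ℝ × ℝ → ℝ} (h : CB k A H) (hA : A ≤ A') : CB k A' H :=
  ⟨h.1, fun i hi x => (h.2 i hi x).trans hA⟩

lemma CB.mul {k : ℕ} {A B : ℝ} {H G : ℝ × ℝ → ℝ} (h : CB k A H) (g : CB k B G) :
    CB k (2 ^ k * A * B) (fun x => H x * G x) := by
  refine ⟨h.1.mul g.1, fun i hi x => ?_⟩
  have hA := h.nonneg
  have hB := g.nonneg
  refine (norm_iteratedFDeriv_mul_le h.1 g.1 x (n := i) (by exact_mod_cast hi)).trans ?_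
  calc _ ≤ ∑ j ∈ Finset.range (i + 1), (i.choose j : ℝ) * A * B := by
        apply Finset.sum_le_sum
        intro j hj
        have hj' : j ≤ i := by simpa [Nat.lt_succ_iff] using hj
        gcongr
        · exact h.2 j (hj'.trans hi) x
        · exact g.2 _ ((Nat.sub_le _ _).trans hi) x
    _ = 2 ^ i * A * B := by
        rw [← Finset.sum_mul, ← Finset.sum_mul]
        congr 2
        exact_mod_cast Nat.sum_range_choose i
    _ ≤ _ := by gcongr; norm_num

lemma CB.deriv {k : ℕ} {A : ℝ} {H : ℝ × ℝ → ℝ} (h : CB (k + 1) A H) (e : ℝ × ℝ) (he : ‖e‖ ≤ 1) :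
    CB k A (fun x => fderiv ℝ H x e) := by
  have hc : ContDiff ℝ k (fderiv ℝ H) := h.1.fderiv_right (by norm_cast)
  refine ⟨hc.clm_apply contDiff_const, fun i hi x => ?_⟩
  refine (norm_iteratedFDeriv_clm_apply_const hc.contDiffAt (by exact_mod_cast hi)).trans ?_
  rw [norm_iteratedFDeriv_fderiv]
  calc _ ≤ 1 * A := by
        gcongr
        exact h.2 _ (by omega) x
    _ = A := one_mul A

lemma CB.of_compact {k : ℕ} {H : ℝ × ℝ → ℝ} (h : ContDiff ℝ k H) (hc : HasCompactSupport H) :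
    ∃ A, 0 ≤ A ∧ CB k A H := by
  have : ∀ i : ℕ, ∃ A, i ≤ k → ∀ x, ‖iteratedFDeriv ℝ i H x‖ ≤ A := by
    intro i
    by_cases hi : i ≤ k
    · obtain ⟨A, hA⟩ := (h.continuous_iteratedFDeriv (m := i) (by exact_mod_cast hi)).bounded_above_of_compact_support
        (hc.iteratedFDeriv i)
      exact ⟨A, fun _ => hA⟩
    · exact ⟨0, fun h => absurd h hi⟩
  choose A hA using this
  refine ⟨∑ i ∈ Finset.range (k + 1), |A i|, by positivity, h, fun i hi x => ?_⟩
  refine (hA i hi x).trans ((le_abs_self _).trans ?_)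
  exact Finset.single_le_sum (f := fun i => |A i|) (fun i _ => abs_nonneg _) (by simp; omega)

/-- A positive lower bound on the Jacobian bounds the pulled back `L²` norm. -/
lemma map_le {K : Set (ℝ × ℝ)} (hK : IsCompact K) {S : ℝ × ℝ → ℝ × ℝ} (hS : ContDiff ℝ 1 S)
    (hinj : InjOn S K) (hdet : ∀ x ∈ K, (fderiv ℝ S x).det ≠ 0) :
    ∃ c : ℝ≥0, (volume.restrict K).map S ≤ c • volume := by
  have hcont : Continuous (fun x => |(fderiv ℝ S x).det|) :=
    (ContinuousLinearMap.continuous_det.comp (hS.continuous_fderiv (by norm_num))).abs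
  obtain ⟨d, hd, hdK⟩ : ∃ d : ℝ, 0 < d ∧ ∀ x ∈ K, d ≤ |(fderiv ℝ S x).det| := by
    rcases K.eq_empty_or_nonempty with h | h
    · exact ⟨1, one_pos, by simp [h]⟩
    · obtain ⟨x, hx, hm⟩ := hK.exists_isMinOn h hcont.continuousOn
      exact ⟨_, abs_pos.2 (hdet x hx), fun y hy => hm hy⟩
  refine ⟨Real.toNNReal d⁻¹, ?_⟩
  rw [Measure.le_iff]
  intro s hs
  have hm : MeasurableSet (S ⁻¹' s) := hS.continuous.measurable hs
  rw [Measure.map_apply hS.continuous.measurable hs, Measure.restrict_apply hm]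
  have hms : MeasurableSet (S ⁻¹' s ∩ K) := hm.inter hK.measurableSet
  have h1 := lintegral_abs_det_fderiv_eq_addHaar_image volume hms (f := S) (f' := fun x => fderiv ℝ S x)
    (fun x _ => ((hS.differentiable (by norm_num)) x).hasFDerivAt.hasFDerivWithinAt)
    (hinj.mono inter_subset_right)
  have h2 : ENNReal.ofReal d * volume (S ⁻¹' s ∩ K) ≤ volume (S '' (S ⁻¹' s ∩ K)) := by
    rw [← h1, ← setLIntegral_const]
    refine setLIntegral_mono' hms fun x hx => ENNReal.ofReal_le_ofReal (hdK x hx.2)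
  have h3 : volume (S '' (S ⁻¹' s ∩ K)) ≤ volume s := by
    apply measure_mono
    rintro _ ⟨x, hx, rfl⟩
    exact hx.1
  have h4 := h2.trans h3
  have : (Real.toNNReal d⁻¹ • (volume : Measure (ℝ × ℝ))) s = (ENNReal.ofReal d)⁻¹ * volume s := by
    rw [Measure.smul_apply, ENNReal.smul_def, smul_eq_mul, ← ENNReal.ofReal_inv_of_pos hd]
    rfl
  rw [this]
  rw [← ENNReal.div_eq_inv_mul, ENNReal.le_div_iff_mul_le (by simp [hd]) (by simp), mul_comm]
  exact h4

lemma holder2 (μ : Measure (ℝ × ℝ)) (f g : ℝ × ℝ → ℂ) (hf : AEStronglyMeasurable f μ)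
    (hg : AEStronglyMeasurable g μ) :
    ∫⁻ w, ‖f w‖ₑ * ‖g w‖ₑ ∂μ ≤ eLpNorm f 2 μ * eLpNorm g 2 μ := by
  have h := eLpNorm_smul_le_mul_eLpNorm (p := 2) (q := 2) (r := 1) hg hf
  rw [eLpNorm_one_eq_lintegral_enorm] at h
  simpa only [Pi.smul_apply', smul_eq_mul, enorm_mul] using h

lemma zero_bound {K : Set (ℝ × ℝ)} (hK : IsCompact K) {S : ℝ × ℝ → ℝ × ℝ} (hS : ContDiff ℝ 1 S)
    (hinj : InjOn S K) (hdet : ∀ x ∈ K, (fderiv ℝ S x).det ≠ 0) :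
    ∃ C : ℝ, 0 ≤ C ∧ ∀ (A : ℝ) (H : ℝ × ℝ → ℝ), (∀ x, |H x| ≤ A) → support H ⊆ K →
      ∀ f φ, Good f → Good φ → ‖TT S H f φ‖ ≤ C * A * nrm f * nrm φ := by
  obtain ⟨c, hc⟩ := map_le hK hS hinj hdet
  set c' : ℝ≥0∞ := (c : ℝ≥0∞) ^ (1 / (2 : ℝ≥0∞)).toReal with hc'
  have hc't : c' ≠ ⊤ := ENNReal.rpow_ne_top_of_nonneg (by positivity) (by simp)
  refine ⟨c'.toReal, ENNReal.toReal_nonneg, fun A H hA hH f φ hf hφ => ?_⟩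
  have hA0 : 0 ≤ A := (abs_nonneg _).trans (hA 0)
  have hpull : eLpNorm (fun w => invFT f (S w)) 2 (volume.restrict K) ≤ c' * eLpNorm f 2 volume := by
    have := eLpNorm_map_measure (p := 2) (μ := volume.restrict K) (f := S) (g := invFT f)
      hf.continuous.aestronglyMeasurable hS.continuous.aemeasurable
    rw [show (fun w => invFT f (S w)) = invFT f ∘ S from rfl, ← this]
    refine (eLpNorm_mono_measure _ hc).trans ?_
    rw [show (c • volume : Measure (ℝ × ℝ)) = (c : ℝ≥0∞) • volume from rfl]
    rw [eLpNorm_smul_measure_of_ne_top (by norm_num), eLpNorm_invFT f hf.integrable hf.memLp, smul_eq_mul]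
  have key : ‖TT S H f φ‖ₑ ≤ ENNReal.ofReal A * (c' * eLpNorm f 2 volume * eLpNorm φ 2 volume) := by
    refine (enorm_integral_le_lintegral_enorm _).trans ?_
    calc ∫⁻ w, ‖(H w : ℂ) * invFT f (S w) * invFT φ w‖ₑ
        ≤ ∫⁻ w in K, ENNReal.ofReal A * (‖invFT f (S w)‖ₑ * ‖invFT φ w‖ₑ) := by
          rw [← lintegral_indicator hK.measurableSet]
          apply lintegral_mono
          intro w
          by_cases hw : w ∈ K
          · simp only [indicator_of_mem hw]
            rw [mul_assoc, enorm_mul, enorm_mul]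
            gcongr
            rw [← ofReal_norm]
            apply ENNReal.ofReal_le_ofReal
            simpa using hA w
          · have : H w = 0 := by by_contra h; exact hw (hH h)
            simp [this]
      _ = ENNReal.ofReal A * ∫⁻ w in K, ‖invFT f (S w)‖ₑ * ‖invFT φ w‖ₑ := by
          rw [lintegral_const_mul' _ _ ENNReal.ofReal_ne_top]
      _ ≤ ENNReal.ofReal A * (eLpNorm (fun w => invFT f (S w)) 2 (volume.restrict K) * eLpNorm (invFT φ) 2 (volume.restrict K)) := by
          gcongr
          exact holder2 _ (fun w => invFT f (S w)) (invFT φ) (hf.continuous.comp hS.continuous).aestronglyMeasurable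
            hφ.continuous.aestronglyMeasurable
      _ ≤ _ := by
          gcongr
          refine (eLpNorm_mono_measure _ Measure.restrict_le_self).trans ?_
          rw [eLpNorm_invFT φ hφ.integrable hφ.memLp]
  have := ENNReal.toReal_mono (by
    refine ENNReal.mul_ne_top (by simp) (ENNReal.mul_ne_top (ENNReal.mul_ne_top hc't hf.memLp.2.ne) hφ.memLp.2.ne)) key
  simp only [toReal_enorm, ENNReal.toReal_mul, ENNReal.toReal_ofReal hA0] at this
  refine this.trans (le_of_eq ?_)
  unfold nrm
  ring

/-- basis vectors -/
def bas (j : Bool) : ℝ × ℝ := if j then (1, 0) else (0, 1)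
/-- components -/
def cmp (l : Bool) (v : ℝ × ℝ) : ℝ := if l then v.1 else v.2

lemma norm_bas (j : Bool) : ‖bas j‖ ≤ 1 := by
  cases j <;> simp [bas, Prod.norm_def]

/-- entries of the derivative -/
def DSf (S : ℝ × ℝ → ℝ × ℝ) (j l : Bool) (w : ℝ × ℝ) : ℝ := cmp l (fderiv ℝ S w (bas j))

/-- components of the phase gradient -/
def XX (S : ℝ × ℝ → ℝ × ℝ) (p q : ℝ × ℝ) (j : Bool) (w : ℝ × ℝ) : ℝ :=
  DSf S j true w * p.1 + DSf S j false w * p.2 - cmp j q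

lemma contDiff_DSf {S : ℝ × ℝ → ℝ × ℝ} {k : ℕ} (hS : ContDiff ℝ (k + 1 : ℕ) S) (j l : Bool) :
    ContDiff ℝ k (DSf S j l) := by
  have hc : ContDiff ℝ k (fderiv ℝ S) := hS.fderiv_right (by norm_cast)
  have := hc.clm_apply (contDiff_const (c := bas j))
  cases l
  · exact this.snd
  · exact this.fst

lemma contDiff_XX {S : ℝ × ℝ → ℝ × ℝ} {k : ℕ} (hS : ContDiff ℝ (k + 1 : ℕ) S) (p q : ℝ × ℝ) (j : Bool) :
    ContDiff ℝ k (XX S p q j) :=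
  (((contDiff_DSf hS j true).mul contDiff_const).add ((contDiff_DSf hS j false).mul contDiff_const)).sub
    contDiff_const

lemma TT_integrable {K : Set (ℝ × ℝ)} (hK : IsCompact K) {S : ℝ × ℝ → ℝ × ℝ} (hS : Continuous S)
    {H : ℝ × ℝ → ℝ} (hH : Continuous H) (hHK : support H ⊆ K) {f φ : ℝ × ℝ → ℂ} (hf : Good f) (hφ : Good φ) :
    Integrable (fun w => (H w : ℂ) * invFT f (S w) * invFT φ w) volume := by
  have h1 := hf.continuous
  have h2 := hφ.continuous
  refine Continuous.integrable_of_hasCompactSupport (by fun_prop) ?_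
  refine HasCompactSupport.of_support_subset_isCompact hK ?_
  intro w hw
  apply hHK
  intro h0
  apply hw
  simp [h0]

lemma int4 {a b c d : ℝ × ℝ → ℂ} (ia : Integrable a volume) (ib : Integrable b volume)
    (ic : Integrable c volume) (id : Integrable d volume) (M : ℂ) :
    ∫ x, (a x + b x + c x + M * d x) = (∫ x, a x) + (∫ x, b x) + (∫ x, c x) + M * ∫ x, d x := by
  have e1 : ∫ x, (a x + b x + c x + M * d x) = (∫ x, (a x + b x + c x)) + ∫ x, M * d x :=
    integral_add ((ia.add ib).add ic) (id.const_mul _)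
  have e2 : ∫ x, (a x + b x + c x) = (∫ x, (a x + b x)) + ∫ x, c x := integral_add (ia.add ib) ic
  rw [e1, e2, integral_add ia ib, integral_const_mul]

lemma ibp {K : Set (ℝ × ℝ)} (hK : IsCompact K) {S : ℝ × ℝ → ℝ × ℝ} (hS : ContDiff ℝ 1 S)
    {H : ℝ × ℝ → ℝ} (hH : ContDiff ℝ 1 H) (hHK : support H ⊆ K) {f φ : ℝ × ℝ → ℂ} (hf : Good f) (hφ : Good φ)
    (p q : ℝ × ℝ) (M : ℝ) (j : Bool) :
    M * TT S (fun w => H w * XX S p q j w) f φ =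
      -(2 * π * Complex.I)⁻¹ * TT S (fun w => fderiv ℝ H w (bas j)) f φ
      - TT S (fun w => H w * DSf S j true w) (shf true (M * p.1) f) φ
      - TT S (fun w => H w * DSf S j false w) (shf false (M * p.2) f) φ
      - TT S H f (shf j (-(M * cmp j q)) φ) := by
  have cS := hS.continuous
  have cD : ∀ l, Continuous (DSf S j l) := fun l => (contDiff_DSf (k := 0) (by simpa using hS) j l).continuous
  have cX : Continuous (XX S p q j) := (contDiff_XX (k := 0) (by simpa using hS) p q j).continuous
  have cH := hH.continuous
  have cdH : Continuous (fun w => fderiv ℝ H w (bas j)) :=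
    (hH.continuous_fderiv (by norm_num)).clm_apply continuous_const
  have sdH : support (fun w => fderiv ℝ H w (bas j)) ⊆ K := by
    intro w hw
    have : w ∈ tsupport H := support_fderiv_subset ℝ (f := H) (by
      intro h0; apply hw; simp [h0])
    exact closure_minimal hHK hK.isClosed this
  have sm : ∀ g : ℝ × ℝ → ℝ, support (fun w => H w * g w) ⊆ K := fun g w hw =>
    hHK (left_ne_zero_of_mul hw)
  have hfs := fun l c => hf.shf l c
  have hφs := fun l c => hφ.shf l c
  have i0 := TT_integrable hK cS cdH sdH hf hφ
  have i1 := TT_integrable hK cS (cH.mul (cD true)) (sm _) (hfs true (M * p.1)) hφ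
  have i2 := TT_integrable hK cS (cH.mul (cD false)) (sm _) (hfs false (M * p.2)) hφ
  have i3 := TT_integrable hK cS cH hHK hf (hφs j (-(M * cmp j q)))
  have i4 := TT_integrable hK cS (cH.mul cX) (sm _) hf hφ
  have i5 := TT_integrable hK cS cH hHK hf hφ
  let F : ℝ × ℝ → ℂ := fun w => invFT f (S w) * invFT φ w
  let F' : ℝ × ℝ → (ℝ × ℝ →L[ℝ] ℂ) := fun w =>
    invFT f (S w) • gradFT φ w + invFT φ w • ((gradFT f (S w)).comp (fderiv ℝ S w))
  have hF : ∀ w, HasFDerivAt F (F' w) w := fun w =>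
    HasFDerivAt.mul ((hf.hasFDerivAt (S w)).comp w ((hS.differentiable (by norm_num)) w).hasFDerivAt) (hφ.hasFDerivAt w)
  have hpt : ∀ w, H w • F' w (bas j) = (2 * π * Complex.I) * (
      ((H w * DSf S j true w : ℝ) : ℂ) * invFT (shf true (M * p.1) f) (S w) * invFT φ w
      + ((H w * DSf S j false w : ℝ) : ℂ) * invFT (shf false (M * p.2) f) (S w) * invFT φ w
      + (H w : ℂ) * invFT f (S w) * invFT (shf j (-(M * cmp j q)) φ) w
      + M * (((H w * XX S p q j w : ℝ) : ℂ) * invFT f (S w) * invFT φ w)) := by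
    intro w
    have e1 := hf.grad_eq (M * p.1, M * p.2) (S w) (fderiv ℝ S w (bas j))
    have e2 := hφ.grad_eq (-(M * q.1), -(M * q.2)) w (bas j)
    simp only [F', add_apply, smul_apply, ContinuousLinearMap.comp_apply, e1, e2, Complex.real_smul, smul_eq_mul]
    simp only [XX, DSf]
    cases j <;> simp [bas, cmp] <;> ring
  have hIntg : Integrable (fun w => H w • F' w (bas j)) volume := by
    simp_rw [hpt]
    exact (((i1.add i2).add i3).add (i4.const_mul _)).const_mul _
  have key := integral_bilinear_hasFDerivAt_right_eq_neg_left_of_integrable (μ := (volume : Measure (ℝ × ℝ)))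
    (f := H) (f' := fderiv ℝ H) (g := F) (g' := F') (v := bas j) (B := ContinuousLinearMap.lsmul ℝ ℝ)
    (by simpa [F, mul_assoc] using i0) hIntg (by simpa [F, mul_assoc] using i5)
    (fun w _ => ((hH.differentiable (by norm_num)) w).hasFDerivAt) (fun w _ => hF w)
  simp only [ContinuousLinearMap.lsmul_apply] at key
  simp_rw [hpt] at key
  rw [integral_const_mul] at key
  have e4 := int4 i1 i2 i3 i4 (M : ℂ)
  simp only [Pi.mul_apply] at e4
  rw [e4] at key
  have k2 : ∫ w, (fderiv ℝ H w) (bas j) • F w = TT S (fun w => fderiv ℝ H w (bas j)) f φ := by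
    unfold TT
    congr 1
    ext w
    simp [F, mul_assoc]
  rw [k2] at key
  change 2 * π * Complex.I * (TT S (fun w => H w * DSf S j true w) (shf true (M * p.1) f) φ
    + TT S (fun w => H w * DSf S j false w) (shf false (M * p.2) f) φ + TT S H f (shf j (-(M * cmp j q)) φ)
    + M * TT S (fun w => H w * XX S p q j w) f φ) = _ at key
  have hne : (2 * π * Complex.I : ℂ) ≠ 0 := by simp [Real.pi_ne_zero]
  have : ∀ a b : ℂ, 2 * π * Complex.I * a = - b → a = -(2 * π * Complex.I)⁻¹ * b := by
    intro a b h
    field_simp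
    linear_combination h
  linear_combination this _ _ key

open scoped Manifold ContDiff in
lemma exists_cutoff {K U : Set (ℝ × ℝ)} (hK : IsCompact K) (hU : IsOpen U) (hKU : K ⊆ U) (k : ℕ) :
    ∃ ρ : ℝ × ℝ → ℝ, ContDiff ℝ k ρ ∧ HasCompactSupport ρ ∧ tsupport ρ ⊆ U ∧ ∀ᶠ x in 𝓝ˢ K, ρ x = 1 := by
  obtain ⟨L, hL, hKL, hLU⟩ := exists_compact_between hK hU hKU
  obtain ⟨f, hf1, hf0, -⟩ := exists_contMDiffMap_one_nhds_of_subset_interior (n := (k : ℕ∞)) 𝓘(ℝ, ℝ × ℝ)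
    hK.isClosed hKL
  have hs : support f ⊆ L := fun x hx => by
    by_contra h
    exact hx (hf0 x h)
  have hts : tsupport f ⊆ L := closure_minimal hs hL.isClosed
  exact ⟨f, f.contMDiff.contDiff, HasCompactSupport.of_support_subset_isCompact hL hs, hts.trans hLU, hf1⟩

lemma contDiff_cut {E : Type*} [NormedAddCommGroup E] [NormedSpace ℝ E] {U : Set (ℝ × ℝ)} (hU : IsOpen U)
    {k : ℕ} {ρ : ℝ × ℝ → ℝ} (hρ : ContDiff ℝ k ρ)
    (hρU : tsupport ρ ⊆ U) {g : ℝ × ℝ → E} (hg : ContDiffOn ℝ k g U) : ContDiff ℝ k (fun x => ρ x • g x) := by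
  rw [contDiff_iff_contDiffAt]
  intro x
  by_cases hx : x ∈ U
  · exact hρ.contDiffAt.smul (hg.contDiffAt (hU.mem_nhds hx))
  · have h0 : ρ =ᶠ[𝓝 x] 0 := notMem_tsupport_iff_eventuallyEq.mp (fun h => hx (hρU h))
    have : (fun x => ρ x • g x) =ᶠ[𝓝 x] fun _ => 0 := by
      filter_upwards [h0] with y hy
      simp [hy]
    exact contDiffAt_const.congr_of_eventuallyEq this

lemma exists_G {K : Set (ℝ × ℝ)} (hK : IsCompact K) {S : ℝ × ℝ → ℝ × ℝ} {k : ℕ}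
    (hS : ContDiff ℝ (k + 1 : ℕ) S) (p q : ℝ × ℝ)
    (hne : ∀ w ∈ K, ¬ (XX S p q true w = 0 ∧ XX S p q false w = 0)) :
    ∃ G : Bool → ℝ × ℝ → ℝ, ∃ A, 0 ≤ A ∧ (∀ j, CB k A (G j)) ∧
      ∀ w ∈ K, G true w * XX S p q true w + G false w * XX S p q false w = 1 := by
  have cX := contDiff_XX hS p q
  let D : ℝ × ℝ → ℝ := fun w => XX S p q true w ^ 2 + XX S p q false w ^ 2
  have cD : ContDiff ℝ k D := ((cX true).pow 2).add ((cX false).pow 2)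
  have hU : IsOpen {w | D w ≠ 0} := isOpen_ne_fun cD.continuous continuous_const
  have hKU : K ⊆ {w | D w ≠ 0} := by
    intro w hw h0
    apply hne w hw
    constructor <;> nlinarith [sq_nonneg (XX S p q true w), sq_nonneg (XX S p q false w), show XX S p q true w ^ 2 + XX S p q false w ^ 2 = 0 from h0]
  obtain ⟨ρ, h1, h2, h3, h4⟩ := exists_cutoff hK hU hKU k
  have cG : ∀ j, ContDiff ℝ k (fun w => ρ w • (XX S p q j w / D w)) := fun j =>
    contDiff_cut hU h1 h3 (ContDiffOn.div (cX j).contDiffOn cD.contDiffOn (fun w hw => hw))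
  have hG : ∀ j, ∃ A, 0 ≤ A ∧ CB k A (fun w => ρ w • (XX S p q j w / D w)) := fun j =>
    CB.of_compact (cG j) (h2.smul_right)
  choose A hA0 hA using hG
  refine ⟨fun j w => ρ w • (XX S p q j w / D w), max (A true) (A false), le_max_of_le_left (hA0 _), ?_, ?_⟩
  · intro j
    refine (hA j).mono ?_
    cases j
    · exact le_max_right _ _
    · exact le_max_left _ _
  · intro w hw
    have e1 : ρ w = 1 := h4.self_of_nhdsSet w hw
    have e2 : D w ≠ 0 := hKU hw
    simp only [e1, one_smul]
    field_simp
    rfl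

lemma CB_DSf {S : ℝ × ℝ → ℝ × ℝ} {k : ℕ} (hS : ContDiff ℝ (k + 1 : ℕ) S) (hc : HasCompactSupport S) :
    ∃ A, 0 ≤ A ∧ ∀ j l, CB k A (DSf S j l) := by
  have h1 : ∀ jl : Bool × Bool, ∃ A, 0 ≤ A ∧ CB k A (DSf S jl.1 jl.2) := by
    rintro ⟨j, l⟩
    refine CB.of_compact (contDiff_DSf hS j l) ?_
    refine (hc.fderiv ℝ).mono ?_
    intro w hw h0
    apply hw
    cases l <;> simp [DSf, h0, cmp]
  choose A hA0 hA using h1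
  refine ⟨∑ jl, A jl, Finset.sum_nonneg fun i _ => hA0 i, fun j l => (hA (j, l)).mono ?_⟩
  exact Finset.single_le_sum (fun i _ => hA0 i) (Finset.mem_univ (j, l))

lemma absorb {P : ℝ → Prop} (hcl : IsClosed {D | P D}) {c D0 : ℝ} (h0 : P D0)
    (hs : ∀ D, P D → P (c + D / 2)) : P (2 * c) := by
  have h : ∀ n : ℕ, P (2 * c + (D0 - 2 * c) * (1 / 2) ^ n) := by
    intro n
    induction n with
    | zero => simpa using h0
    | succ n ih =>
      have := hs _ ih
      convert this using 1
      ring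
  have ht : Tendsto (fun n : ℕ => 2 * c + (D0 - 2 * c) * (1 / 2 : ℝ) ^ n) atTop (𝓝 (2 * c + (D0 - 2 * c) * 0)) :=
    ((tendsto_pow_atTop_nhds_zero_of_lt_one (by norm_num) (by norm_num)).const_mul _).const_add _
  have := hcl.mem_of_tendsto ht (Eventually.of_forall h)
  simpa using this

lemma shf_supp {f : ℝ × ℝ → ℂ} {l : Bool} {c : ℝ} {ξ : ℝ × ℝ} (h : shf l c f ξ ≠ 0) : f ξ ≠ 0 := by
  unfold shf at h
  exact right_ne_zero_of_mul h

lemma nrm_shf {f : ℝ × ℝ → ℂ} (hf : Good f) (l : Bool) (c : ℝ × ℝ) {e : ℝ} (he : 0 ≤ e)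
    (h : ∀ ξ, f ξ ≠ 0 → ‖ξ - c‖ ≤ e) : nrm (shf l (cmp l c) f) ≤ e * nrm f := by
  refine hf.nrm_mul he ?_
  intro ξ hξ
  refine le_trans ?_ (h ξ hξ)
  rw [Complex.norm_real]
  cases l
  · exact norm_snd_le (ξ - c)
  · exact norm_fst_le (ξ - c)

lemma TT_congr {S : ℝ × ℝ → ℝ × ℝ} {H H' : ℝ × ℝ → ℝ} (h : ∀ w, H w = H' w) (f φ : ℝ × ℝ → ℂ) :
    TT S H f φ = TT S H' f φ := by
  have : H = H' := funext h
  rw [this]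

/-- the statement proved by induction -/
def CoreP (S : ℝ × ℝ → ℝ × ℝ) (K : Set (ℝ × ℝ)) (p q : ℝ × ℝ) (k : ℕ) (ε C M : ℝ) : Prop :=
  ∀ A H, CB k A H → support H ⊆ K → ∀ f φ, Good f → Good φ →
    (∀ ξ, f ξ ≠ 0 → ‖ξ - M • p‖ ≤ ε * M) → (∀ ξ, φ ξ ≠ 0 → ‖ξ - (-(M • q))‖ ≤ ε * M) →
    ‖TT S H f φ‖ * M ^ k ≤ C * A * nrm f * nrm φ

lemma core_step {K : Set (ℝ × ℝ)} (hK : IsCompact K) {S : ℝ × ℝ → ℝ × ℝ} {k : ℕ}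
    (hS : ContDiff ℝ (k + 2 : ℕ) S) {p q : ℝ × ℝ} {G : Bool → ℝ × ℝ → ℝ} {AG AS : ℝ}
    (hG : ∀ j, CB (k + 1) AG (G j)) (hA : ∀ j l, CB (k + 1) AS (DSf S j l))
    (h1 : ∀ w ∈ K, G true w * XX S p q true w + G false w * XX S p q false w = 1)
    {ε C0 M D : ℝ} (hε : 0 ≤ ε) (hM : 0 < M) (hD : 0 ≤ D)
    (hP : CoreP S K p q k ε C0 M) (hQ : CoreP S K p q (k + 1) ε D M) :
    CoreP S K p q (k + 1) ε (2 * (C0 * (2 ^ (k + 1) * AG)) +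
      D * (ε * (4 * (2 ^ (k + 1) * (2 ^ (k + 1) * AG) * AS) + 2 * (2 ^ (k + 1) * AG)))) M := by
  intro A H hH hHK f φ hf hφ sf sφ
  have hA0 := hH.nonneg
  have hAG0 := (hG true).nonneg
  have hAS0 := (hA true true).nonneg
  set N : ℝ := 2 ^ (k + 1) with hN
  have hN0 : 0 ≤ N := by positivity
  have nf := nrm_nonneg f
  have nφ := nrm_nonneg φ
  have hεM : 0 ≤ ε * M := by positivity
  have sm : ∀ g : ℝ × ℝ → ℝ, support (fun w => H w * g w) ⊆ K := fun g w hw =>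
    hHK (left_ne_zero_of_mul hw)
  have sm2 : ∀ g g' : ℝ × ℝ → ℝ, support (fun w => H w * g w * g' w) ⊆ K := fun g g' w hw =>
    hHK (left_ne_zero_of_mul (left_ne_zero_of_mul hw))
  have hHG : ∀ j, CB (k + 1) (N * A * AG) (fun w => H w * G j w) := fun j => hH.mul (hG j)
  -- each direction
  have hj : ∀ j, ‖(M : ℂ) * TT S (fun w => H w * G j w * XX S p q j w) f φ‖ * M ^ k ≤
      (C0 * (N * AG) + D * (ε * (2 * (N * (N * AG) * AS) + N * AG))) * A * nrm f * nrm φ := by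
    intro j
    have e := ibp hK (hS.of_le (by norm_cast; omega)) ((hHG j).1.of_le (by norm_cast; omega)) (sm (G j)) hf hφ p q M j
    have sdH : support (fun w => fderiv ℝ (fun w => H w * G j w) w (bas j)) ⊆ K := by
      intro w hw
      have : w ∈ tsupport (fun w => H w * G j w) := support_fderiv_subset ℝ (f := fun w => H w * G j w) (by
        intro h0; apply hw; simp [h0])
      exact closure_minimal (sm (G j)) hK.isClosed this
    have b0 := hP (N * A * AG) _ ((hHG j).deriv (bas j) (norm_bas j)) sdH f φ hf hφ sf sφ
    have b1 : ∀ l, ‖TT S (fun w => H w * G j w * DSf S j l w) (shf l (cmp l (M • p)) f) φ‖ * M ^ (k + 1) ≤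
        D * (N * (N * A * AG) * AS) * (ε * M * nrm f) * nrm φ := by
      intro l
      refine (hQ _ _ ((hHG j).mul (hA j l)) (sm2 _ _) _ _ (hf.shf l _) hφ
        (fun ξ hξ => sf ξ (shf_supp hξ)) sφ).trans ?_
      have := nrm_shf hf l (M • p) hεM sf
      gcongr
    have b3 : ‖TT S (fun w => H w * G j w) f (shf j (cmp j (-(M • q))) φ)‖ * M ^ (k + 1) ≤
        D * (N * A * AG) * nrm f * (ε * M * nrm φ) := by
      refine (hQ _ _ (hHG j) (sm _) _ _ hf (hφ.shf j _) sf
        (fun ξ hξ => sφ ξ (shf_supp hξ))).trans ?_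
      have := nrm_shf hφ j (-(M • q)) hεM sφ
      gcongr
    have c3 : cmp j (-(M • q)) = -(M * cmp j q) := by cases j <;> simp [cmp]
    have bt := b1 true
    have bf := b1 false
    have ct : cmp true (M • p) = M * p.1 := by simp [cmp]
    have cf : cmp false (M • p) = M * p.2 := by simp [cmp]
    rw [c3] at b3
    rw [ct] at bt
    rw [cf] at bf
    rw [e]
    set T0 := TT S (fun w => fderiv ℝ (fun w => H w * G j w) w (bas j)) f φ
    set T1 := TT S (fun w => H w * G j w * DSf S j true w) (shf true (M * p.1) f) φ
    set T2 := TT S (fun w => H w * G j w * DSf S j false w) (shf false (M * p.2) f) φ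
    set T3 := TT S (fun w => H w * G j w) f (shf j (-(M * cmp j q)) φ)
    have hpi : ‖-(2 * π * Complex.I : ℂ)⁻¹ * T0‖ ≤ ‖T0‖ := by
      rw [norm_mul]
      refine mul_le_of_le_one_left (norm_nonneg _) ?_
      rw [norm_neg, norm_inv]
      apply inv_le_one_of_one_le₀
      simp only [norm_mul, Complex.norm_real, Complex.norm_I, Complex.norm_ofNat, Real.norm_eq_abs, abs_of_pos Real.pi_pos]
      nlinarith [Real.pi_gt_three]
    have tri : ‖-(2 * π * Complex.I : ℂ)⁻¹ * T0 - T1 - T2 - T3‖ ≤ ‖T0‖ + ‖T1‖ + ‖T2‖ + ‖T3‖ := by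
      refine (norm_sub_le _ _).trans ?_
      gcongr
      refine (norm_sub_le _ _).trans ?_
      gcongr
      refine (norm_sub_le _ _).trans ?_
      gcongr
    have red : ∀ x y : ℝ, x * M ^ (k + 1) ≤ M * y → x * M ^ k ≤ y := by
      intro x y h
      rw [pow_succ] at h
      nlinarith
    have r1 := red _ (D * (N * (N * A * AG) * AS) * (ε * nrm f) * nrm φ) (bt.trans (le_of_eq (by ring)))
    have r2 := red _ (D * (N * (N * A * AG) * AS) * (ε * nrm f) * nrm φ) (bf.trans (le_of_eq (by ring)))
    have r3 := red _ (D * (N * A * AG) * nrm f * (ε * nrm φ)) (b3.trans (le_of_eq (by ring)))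
    calc _ ≤ (‖T0‖ + ‖T1‖ + ‖T2‖ + ‖T3‖) * M ^ k := by gcongr
      _ = ‖T0‖ * M ^ k + ‖T1‖ * M ^ k + ‖T2‖ * M ^ k + ‖T3‖ * M ^ k := by ring
      _ ≤ _ := add_le_add (add_le_add (add_le_add b0 r1) r2) r3
      _ = _ := by ring
  have cS := hS.continuous
  have it : ∀ j, Integrable (fun w => ((H w * G j w * XX S p q j w : ℝ) : ℂ) * invFT f (S w) * invFT φ w) volume := by
    intro j
    refine TT_integrable (H := fun w => H w * G j w * XX S p q j w) hK cS ?_ (sm2 _ _) hf hφ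
    exact ((hHG j).1.continuous).mul (contDiff_XX hS p q j).continuous
  have split : TT S H f φ = TT S (fun w => H w * G true w * XX S p q true w) f φ +
      TT S (fun w => H w * G false w * XX S p q false w) f φ := by
    unfold TT
    rw [← integral_add (it true) (it false)]
    congr 1
    ext w
    have hw : H w = H w * G true w * XX S p q true w + H w * G false w * XX S p q false w := by
      by_cases hw : w ∈ K
      · linear_combination (-(H w)) * (h1 w hw)
      · have : H w = 0 := by
          by_contra h0
          exact hw (hHK h0)
        simp [this]
    conv_lhs => rw [hw]
    push_cast
    ring
  have e2 : ‖TT S H f φ‖ * M ^ (k + 1) ≤ ‖(M : ℂ) * TT S (fun w => H w * G true w * XX S p q true w) f φ‖ * M ^ k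
      + ‖(M : ℂ) * TT S (fun w => H w * G false w * XX S p q false w) f φ‖ * M ^ k := by
    rw [split, norm_mul, norm_mul, Complex.norm_real, Real.norm_of_nonneg hM.le]
    calc _ ≤ (‖TT S (fun w => H w * G true w * XX S p q true w) f φ‖ +
      ‖TT S (fun w => H w * G false w * XX S p q false w) f φ‖) * M ^ (k + 1) := by
            gcongr
            exact norm_add_le _ _
      _ = _ := by ring
  refine e2.trans ((add_le_add (hj true) (hj false)).trans (le_of_eq ?_))
  ring

lemma core {K : Set (ℝ × ℝ)} (hK : IsCompact K) {S : ℝ × ℝ → ℝ × ℝ} (hc : HasCompactSupport S)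
    (hinj : InjOn S K) (hdet : ∀ x ∈ K, (fderiv ℝ S x).det ≠ 0) (p q : ℝ × ℝ)
    (hne : ∀ w ∈ K, ¬ (XX S p q true w = 0 ∧ XX S p q false w = 0)) (k : ℕ)
    (hS : ContDiff ℝ (k + 1 : ℕ) S) :
    ∃ ε > 0, ∃ C ≥ 0, ∀ M > 0, CoreP S K p q k ε C M := by
  obtain ⟨Cz, hCz, hz⟩ := zero_bound hK (hS.of_le (by norm_cast; omega)) hinj hdet
  induction k with
  | zero =>
    refine ⟨1, one_pos, Cz, hCz, ?_⟩
    intro M hM A H hH hHK f φ hf hφ _ _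
    simpa using hz A H hH.abs_le hHK f φ hf hφ
  | succ k ih =>
    obtain ⟨ε0, hε0, C0, hC0, h0⟩ := ih (hS.of_le (by norm_cast; omega))
    obtain ⟨G, AG, hAG, hG, hG1⟩ := exists_G hK hS p q hne
    obtain ⟨AS, hAS, hA⟩ := CB_DSf hS hc
    set B : ℝ := 4 * (2 ^ (k + 1) * (2 ^ (k + 1) * AG) * AS) + 2 * (2 ^ (k + 1) * AG) with hB
    have hB0 : 0 ≤ B := by positivity
    set ε : ℝ := min ε0 (1 / (2 * (B + 1))) with hε
    have hεp : 0 < ε := lt_min hε0 (by positivity)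
    have hεB : ε * B ≤ 1 / 2 := by
      have : ε ≤ 1 / (2 * (B + 1)) := min_le_right _ _
      calc ε * B ≤ 1 / (2 * (B + 1)) * B := by gcongr
        _ ≤ 1 / 2 := by
          rw [div_mul_eq_mul_div, div_le_div_iff₀ (by positivity) (by positivity)]
          linarith
    refine ⟨ε, hεp, 2 * (2 * (C0 * (2 ^ (k + 1) * AG))), by positivity, ?_⟩
    intro M hM
    have mono : CoreP S K p q k ε C0 M := by
      intro A H hH hHK f φ hf hφ sf sφ
      have : ε * M ≤ ε0 * M := by
        gcongr
        exact min_le_left _ _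
      exact h0 M hM A H hH hHK f φ hf hφ (fun ξ hξ => (sf ξ hξ).trans this) (fun ξ hξ => (sφ ξ hξ).trans this)
    refine (absorb (P := fun D => 0 ≤ D ∧ CoreP S K p q (k + 1) ε D M) (D0 := Cz * M ^ (k + 1)) ?_ ⟨by positivity, ?_⟩ ?_).2
    · have : {D | 0 ≤ D ∧ CoreP S K p q (k + 1) ε D M} = Set.Ici 0 ∩ {D | CoreP S K p q (k + 1) ε D M} := rfl
      rw [this]
      refine isClosed_Ici.inter ?_
      unfold CoreP
      simp only [ofPred_forall]
      repeat (refine isClosed_iInter fun _ => ?_)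
      exact isClosed_le continuous_const (by fun_prop)
    · intro A H hH hHK f φ hf hφ _ _
      have := hz A H hH.abs_le hHK f φ hf hφ
      calc _ ≤ (Cz * A * nrm f * nrm φ) * M ^ (k + 1) := by gcongr
        _ = _ := by ring
    · rintro D ⟨hD, hQ⟩
      refine ⟨by positivity, ?_⟩
      have := core_step hK hS hG hA hG1 hεp.le hM hD mono hQ
      intro A H hH hHK f φ hf hφ sf sφ
      refine (this A H hH hHK f φ hf hφ sf sφ).trans ?_
      have n1 := nrm_nonneg f
      have n2 := nrm_nonneg φ
      have n3 := hH.nonneg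
      have : D * (ε * B) ≤ D / 2 := by nlinarith
      gcongr

/-- grid index -/
def kap (t : ℝ) (ξ : ℝ × ℝ) : ℤ × ℤ := (⌊ξ.1 / t⌋, ⌊ξ.2 / t⌋)

/-- restriction to a grid cell -/
def cell (t : ℝ) (a : ℤ × ℤ) (f : ℝ × ℝ → ℂ) (ξ : ℝ × ℝ) : ℂ := (if kap t ξ = a then 1 else 0) * f ξ

lemma measurable_kap (t : ℝ) : Measurable (kap t) :=
  (Int.measurable_floor.comp (measurable_fst.div_const t)).prodMk
    (Int.measurable_floor.comp (measurable_snd.div_const t))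

lemma good_cell {t : ℝ} {a : ℤ × ℤ} {f : ℝ × ℝ → ℂ} (hf : Good f) : Good (cell t a f) := by
  refine hf.mul (c := 1) ?_ ?_
  · refine (Measurable.ite ?_ measurable_const measurable_const).aestronglyMeasurable
    exact measurable_kap t (measurableSet_singleton a)
  · intro ξ _
    split_ifs <;> simp

lemma nrm_cell {t : ℝ} {a : ℤ × ℤ} {f : ℝ × ℝ → ℂ} (hf : Good f) : nrm (cell t a f) ≤ nrm f := by
  have := hf.nrm_mul (a := fun ξ => if kap t ξ = a then 1 else 0) (c := 1) zero_le_one (by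
    intro ξ _
    split_ifs <;> simp)
  rw [one_mul] at this
  exact this

lemma cell_ne {t : ℝ} {a : ℤ × ℤ} {f : ℝ × ℝ → ℂ} {ξ : ℝ × ℝ} (h : cell t a f ξ ≠ 0) :
    kap t ξ = a ∧ f ξ ≠ 0 := by
  refine ⟨?_, right_ne_zero_of_mul h⟩
  by_contra h0
  simp [cell, h0] at h

lemma kap_dist {t : ℝ} (ht : 0 < t) {ξ ξ' : ℝ × ℝ} (h : kap t ξ = kap t ξ') : ‖ξ - ξ'‖ ≤ t := by
  have aux : ∀ x y : ℝ, ⌊x / t⌋ = ⌊y / t⌋ → |x - y| ≤ t := by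
    intro x y h
    have := Int.abs_sub_lt_one_of_floor_eq_floor h
    rw [← sub_div, abs_div, abs_of_pos ht, div_lt_one ht] at this
    exact this.le
  simp only [kap, Prod.mk.injEq] at h
  rw [Prod.norm_def]
  exact max_le (aux _ _ h.1) (aux _ _ h.2)

lemma cell_sum {t B : ℝ} (ht : 0 < t) {L : ℤ} (hL : B / t + 1 ≤ L) {f : ℝ × ℝ → ℂ}
    (hb : ∀ ξ, f ξ ≠ 0 → ‖ξ‖ ≤ B) :
    f = fun ξ => ∑ a ∈ Finset.Icc (-L) L ×ˢ Finset.Icc (-L) L, cell t a f ξ := by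
  ext ξ
  by_cases h0 : f ξ = 0
  · simp [cell, h0]
  · have hB := hb ξ h0
    have aux : ∀ x : ℝ, |x| ≤ B → -L ≤ ⌊x / t⌋ ∧ ⌊x / t⌋ ≤ L := by
      intro x hx
      have h1 : |x / t| ≤ B / t := by
        rw [abs_div, abs_of_pos ht]
        gcongr
      rw [abs_le] at h1
      constructor
      · rw [Int.le_floor]
        push_cast
        linarith
      · have := Int.floor_le (x / t)
        have : ((⌊x / t⌋ : ℤ) : ℝ) ≤ L := by linarith
        exact_mod_cast this
    have h1 := aux ξ.1 ((norm_fst_le ξ).trans hB)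
    have h2 := aux ξ.2 ((norm_snd_le ξ).trans hB)
    simp only [cell, ite_mul, one_mul, zero_mul]
    rw [Finset.sum_ite_eq]
    rw [if_pos]
    simp [kap, h1, h2]

lemma TT_sum_left {ι : Type*} (s : Finset ι) {K : Set (ℝ × ℝ)} (hK : IsCompact K) {S : ℝ × ℝ → ℝ × ℝ} (hS : Continuous S)
    {H : ℝ × ℝ → ℝ} (hH : Continuous H) (hHK : support H ⊆ K) (f : ι → ℝ × ℝ → ℂ) (φ : ℝ × ℝ → ℂ)
    (hf : ∀ i ∈ s, Good (f i)) (hφ : Good φ) :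
    TT S H (fun ξ => ∑ i ∈ s, f i ξ) φ = ∑ i ∈ s, TT S H (f i) φ := by
  unfold TT
  rw [← integral_finsetSum s (fun i hi => TT_integrable hK hS hH hHK (hf i hi) hφ)]
  congr 1
  ext w
  rw [invFT_sum s f hf, Finset.mul_sum, Finset.sum_mul]

lemma TT_sum_right {ι : Type*} (s : Finset ι) {K : Set (ℝ × ℝ)} (hK : IsCompact K) {S : ℝ × ℝ → ℝ × ℝ} (hS : Continuous S)
    {H : ℝ × ℝ → ℝ} (hH : Continuous H) (hHK : support H ⊆ K) (f : ℝ × ℝ → ℂ) (φ : ι → ℝ × ℝ → ℂ)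
    (hf : Good f) (hφ : ∀ i ∈ s, Good (φ i)) :
    TT S H f (fun ξ => ∑ i ∈ s, φ i ξ) = ∑ i ∈ s, TT S H f (φ i) := by
  unfold TT
  rw [← integral_finsetSum s (fun i hi => TT_integrable hK hS hH hHK hf (hφ i hi))]
  congr 1
  ext w
  rw [invFT_sum s φ hφ, Finset.mul_sum]

lemma cover {K : Set (ℝ × ℝ)} (hK : IsCompact K) {S : ℝ × ℝ → ℝ × ℝ} (hc : HasCompactSupport S)
    (hinj : InjOn S K) (hdet : ∀ x ∈ K, (fderiv ℝ S x).det ≠ 0) (k : ℕ)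
    (hS : ContDiff ℝ (k + 1 : ℕ) S) {A : ℝ} {H : ℝ × ℝ → ℝ} (hH : CB k A H) (hHK : support H ⊆ K)
    {P : Set ((ℝ × ℝ) × (ℝ × ℝ))} (hP : IsCompact P)
    (hne : ∀ z ∈ P, ∀ w ∈ K, ¬ (XX S z.1 z.2 true w = 0 ∧ XX S z.1 z.2 false w = 0)) :
    ∃ C ≥ 0, ∀ M > 0, ∀ f φ, Good f → Good φ → (∀ ξ, f ξ ≠ 0 → ‖ξ‖ ≤ 2 * M) → (∀ ξ, φ ξ ≠ 0 → ‖ξ‖ ≤ 2 * M) →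
      (∀ ξ ζ, f ξ ≠ 0 → φ ζ ≠ 0 → (M⁻¹ • ξ, -(M⁻¹ • ζ)) ∈ P) →
      ‖TT S H f φ‖ * M ^ k ≤ C * nrm f * nrm φ := by
  have hcore : ∀ z : (ℝ × ℝ) × (ℝ × ℝ), ∃ ε > 0, ∃ C ≥ 0, z ∈ P → ∀ M > 0, CoreP S K z.1 z.2 k ε C M := by
    intro z
    by_cases hz : z ∈ P
    · obtain ⟨ε, h1, C, h2, h3⟩ := core hK hc hinj hdet z.1 z.2 (hne z hz) k hS
      exact ⟨ε, h1, C, h2, fun _ => h3⟩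
    · exact ⟨1, one_pos, 0, le_refl _, fun h => absurd h hz⟩
  choose ε hε C hC hcP using hcore
  obtain ⟨T, hTP, hT⟩ := hP.elim_nhds_subcover (fun z => Metric.ball z (ε z)) (fun z _ => Metric.ball_mem_nhds z (hε z))
  obtain ⟨lam, hlam, hleb⟩ := lebesgue_number_lemma_of_metric (ι := {z // z ∈ T}) (c := fun z => Metric.ball z.1 (ε z.1)) hP
    (fun z => Metric.isOpen_ball) (by
      intro x hx
      obtain ⟨z, hz, hxz⟩ := mem_iUnion₂.mp (hT hx)
      exact mem_iUnion.mpr ⟨⟨z, hz⟩, hxz⟩)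
  have hA0 := hH.nonneg
  set s := lam / 2 with hs
  have hs0 : 0 < s := by positivity
  obtain ⟨L, hL⟩ := exists_int_gt (2 / s + 1)
  set I := Finset.Icc (-L) L ×ˢ Finset.Icc (-L) L with hI
  set CC := ∑ z ∈ T, C z with hCC
  have hCC0 : 0 ≤ CC := Finset.sum_nonneg fun z _ => hC z
  refine ⟨∑ a ∈ I, ∑ b ∈ I, CC * A, Finset.sum_nonneg fun _ _ => Finset.sum_nonneg fun _ _ => by positivity, ?_⟩
  intro M hM f φ hf hφ bf bφ hsup
  have nf := nrm_nonneg f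
  have nφ := nrm_nonneg φ
  have ht : 0 < M * s := by positivity
  have hL' : 2 * M / (M * s) + 1 ≤ L := by
    have : 2 * M / (M * s) = 2 / s := by field_simp
    rw [this]; exact hL.le
  have ef := cell_sum ht hL' bf
  have eφ := cell_sum ht hL' bφ
  have e : TT S H f φ = ∑ a ∈ I, ∑ b ∈ I, TT S H (cell (M * s) a f) (cell (M * s) b φ) := by
    conv_lhs => rw [ef, TT_sum_left _ hK hS.continuous hH.1.continuous hHK _ _ (fun _ _ => good_cell hf) hφ]
    refine Finset.sum_congr rfl fun a _ => ?_
    conv_lhs => rw [eφ, TT_sum_right _ hK hS.continuous hH.1.continuous hHK _ _ (good_cell hf) (fun _ _ => good_cell hφ)]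
  have each : ∀ a b, ‖TT S H (cell (M * s) a f) (cell (M * s) b φ)‖ * M ^ k ≤ CC * A * nrm f * nrm φ := by
    intro a b
    by_cases h0 : (∃ ξ, cell (M * s) a f ξ ≠ 0) ∧ ∃ ζ, cell (M * s) b φ ζ ≠ 0
    · obtain ⟨⟨ξ0, hξ0⟩, ζ0, hζ0⟩ := h0
      obtain ⟨ka, fa⟩ := cell_ne hξ0
      obtain ⟨kb, fb⟩ := cell_ne hζ0
      obtain ⟨⟨z, hzT⟩, hz⟩ := hleb _ (hsup ξ0 ζ0 fa fb)
      have sc : ∀ v v0 : ℝ × ℝ, ‖v - v0‖ ≤ M * s → ‖M⁻¹ • v - M⁻¹ • v0‖ < lam := by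
        intro v v0 h
        rw [← smul_sub, norm_smul, norm_inv, Real.norm_of_nonneg hM.le, inv_mul_lt_iff₀ hM]
        have : M * s < M * lam := by gcongr; linarith
        linarith
      have key : ∀ ξ ζ, kap (M * s) ξ = a → kap (M * s) ζ = b → ‖ξ - M • z.1‖ ≤ ε z * M ∧ ‖ζ - -(M • z.2)‖ ≤ ε z * M := by
        intro ξ ζ h1 h2
        have d1 := sc _ _ (kap_dist ht (h1.trans ka.symm))
        have d2 := sc _ _ (kap_dist ht (h2.trans kb.symm))
        have hb : (M⁻¹ • ξ, -(M⁻¹ • ζ)) ∈ Metric.ball z (ε z) := by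
          apply hz
          rw [Metric.mem_ball, dist_eq_norm, Prod.norm_def]
          refine max_lt d1 ?_
          have : -(M⁻¹ • ζ) - -(M⁻¹ • ζ0) = -(M⁻¹ • ζ - M⁻¹ • ζ0) := by abel
          change ‖-(M⁻¹ • ζ) - -(M⁻¹ • ζ0)‖ < lam
          rw [this, norm_neg]
          exact d2
        rw [Metric.mem_ball, dist_eq_norm, Prod.norm_def] at hb
        have b1 : ‖M⁻¹ • ξ - z.1‖ < ε z := (le_max_left _ _).trans_lt hb
        have b2 : ‖-(M⁻¹ • ζ) - z.2‖ < ε z := (le_max_right _ _).trans_lt hb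
        constructor
        · have : ξ - M • z.1 = M • (M⁻¹ • ξ - z.1) := by
            rw [smul_sub, smul_inv_smul₀ hM.ne']
          rw [this, norm_smul, Real.norm_of_nonneg hM.le, mul_comm]
          gcongr
        · have : ζ - -(M • z.2) = -(M • (-(M⁻¹ • ζ) - z.2)) := by
            rw [smul_sub, smul_neg, smul_inv_smul₀ hM.ne']
            abel
          rw [this, norm_neg, norm_smul, Real.norm_of_nonneg hM.le, mul_comm]
          gcongr
      have := hcP z (hTP z hzT) M hM A H hH hHK _ _ (good_cell (t := M * s) (a := a) hf) (good_cell (t := M * s) (a := b) hφ)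
        (fun ξ hξ => (key ξ ζ0 (cell_ne hξ).1 kb).1) (fun ζ hζ => (key ξ0 ζ ka (cell_ne hζ).1).2)
      refine this.trans ?_
      have c1 : C z ≤ CC := Finset.single_le_sum (fun z _ => hC z) hzT
      have c2 := nrm_cell (t := M * s) (a := a) hf
      have c3 := nrm_cell (t := M * s) (a := b) hφ
      have c4 := nrm_nonneg (cell (M * s) a f)
      have c5 := nrm_nonneg (cell (M * s) b φ)
      gcongr
    · have z0 : TT S H (cell (M * s) a f) (cell (M * s) b φ) = 0 := by
        rw [not_and_or] at h0
        push Not at h0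
        rcases h0 with h0 | h0
        · simp [TT, invFT, h0]
        · simp [TT, invFT, h0]
      rw [z0]
      simp only [norm_zero, zero_mul]
      positivity
  rw [e]
  calc _ ≤ (∑ a ∈ I, ∑ b ∈ I, ‖TT S H (cell (M * s) a f) (cell (M * s) b φ)‖) * M ^ k := by
        gcongr
        refine (norm_sum_le _ _).trans (Finset.sum_le_sum fun a _ => norm_sum_le _ _)
    _ = ∑ a ∈ I, ∑ b ∈ I, ‖TT S H (cell (M * s) a f) (cell (M * s) b φ)‖ * M ^ k := by
        simp only [Finset.sum_mul]
    _ ≤ ∑ a ∈ I, ∑ b ∈ I, CC * A * nrm f * nrm φ :=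
        Finset.sum_le_sum fun a _ => Finset.sum_le_sum fun b _ => each a b
    _ = _ := by simp only [Finset.sum_mul]

lemma en_nonneg (v : ℝ × ℝ) : 0 ≤ en v := Real.sqrt_nonneg _

lemma en_smul (c : ℝ) (v : ℝ × ℝ) : en (c • v) = |c| * en v := by
  unfold en
  rw [← Real.sqrt_sq_eq_abs, ← Real.sqrt_mul (sq_nonneg c)]
  congr 1
  simp
  ring

lemma norm_le_en (v : ℝ × ℝ) : ‖v‖ ≤ en v := by
  rw [Prod.norm_def]
  unfold en
  refine max_le ?_ ?_
  · rw [Real.norm_eq_abs]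
    exact Real.abs_le_sqrt (by nlinarith [sq_nonneg v.2])
  · rw [Real.norm_eq_abs]
    exact Real.abs_le_sqrt (by nlinarith [sq_nonneg v.1])

lemma en_pos {v : ℝ × ℝ} (h : v ≠ 0) : 0 < en v := (norm_pos_iff.mpr h).trans_le (norm_le_en v)

lemma en_zero : en 0 = 0 := by simp [en]

lemma continuous_en : Continuous en := by unfold en; fun_prop

lemma psi_up {χ : ℝ → ℝ} (hχ : ChiOK χ) (Θ : Polarization) (n : ℕ) (σ : Bool) {ξ : ℝ × ℝ}
    (h : psiLP χ Θ n σ ξ ≠ 0) : en ξ ≤ (2 : ℝ) ^ ((n : ℤ) + 1) := by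
  by_contra hc
  push Not at hc
  apply h
  unfold psiLP
  obtain ⟨-, -, h2, -⟩ := hχ
  split_ifs with hn
  · subst hn
    rw [h2 _ (by simpa using hc.le)]
    simp
  all_goals
    have e1 : (2 : ℝ) ≤ (2 : ℝ) ^ (-(n : ℤ)) * en ξ := by
      calc (2 : ℝ) = (2 : ℝ) ^ (-(n : ℤ)) * (2 : ℝ) ^ ((n : ℤ) + 1) := by
            rw [← zpow_add₀ two_ne_zero]; simp
        _ ≤ _ := by gcongr
    have e2 : (2 : ℝ) ≤ (2 : ℝ) ^ (-(n : ℤ) + 1) * en ξ := by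
      refine e1.trans ?_
      have := en_nonneg ξ
      gcongr
      · norm_num
      · omega
    rw [h2 _ e1, h2 _ e2]
    simp

lemma psi_lo {χ : ℝ → ℝ} (hχ : ChiOK χ) (Θ : Polarization) {n : ℕ} (hn : 1 ≤ n) (σ : Bool) {ξ : ℝ × ℝ}
    (h : psiLP χ Θ n σ ξ ≠ 0) : (2 : ℝ) ^ ((n : ℤ) - 1) ≤ en ξ := by
  by_contra hc
  push Not at hc
  apply h
  unfold psiLP
  obtain ⟨-, h1, -, -⟩ := hχ
  have e2 : (2 : ℝ) ^ (-(n : ℤ) + 1) * en ξ ≤ 1 := by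
    calc _ ≤ (2 : ℝ) ^ (-(n : ℤ) + 1) * (2 : ℝ) ^ ((n : ℤ) - 1) := by gcongr
      _ = 1 := by rw [← zpow_add₀ two_ne_zero]; simp
  have e1 : (2 : ℝ) ^ (-(n : ℤ)) * en ξ ≤ 1 := by
    refine le_trans ?_ e2
    have := en_nonneg ξ
    gcongr
    · norm_num
    · omega
  rw [if_neg (by omega), h1 _ e1, h1 _ e2]
  simp

lemma psi_cone_p {χ : ℝ → ℝ} (hχ : ChiOK χ) (Θ : Polarization) {n : ℕ} (hn : 1 ≤ n) {ξ : ℝ × ℝ}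
    (h : psiLP χ Θ n true ξ ≠ 0) : ξ ∉ Θ.Cm := by
  intro hm
  have h0 : ξ ≠ 0 := by
    rintro rfl
    have := psi_lo hχ Θ hn _ h
    rw [en_zero] at this
    exact absurd this (not_le.mpr (by positivity))
  apply h
  unfold psiLP
  rw [if_neg (by omega)]
  simp [Θ.zero_on_m ξ hm h0]

lemma psi_cone_m {χ : ℝ → ℝ} (hχ : ChiOK χ) (Θ : Polarization) {n : ℕ} (hn : 1 ≤ n) {ξ : ℝ × ℝ}
    (h : psiLP χ Θ n false ξ ≠ 0) : ξ ∉ Θ.Cp := by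
  intro hm
  have h0 : ξ ≠ 0 := by
    rintro rfl
    have := psi_lo hχ Θ hn _ h
    rw [en_zero] at this
    exact absurd this (not_le.mpr (by positivity))
  apply h
  unfold psiLP
  rw [if_neg (by omega)]
  simp [Θ.phim_def, Θ.one_on_p ξ hm h0]

lemma psi_abs {χ : ℝ → ℝ} (hχ : ChiOK χ) (Θ : Polarization) (n : ℕ) (σ : Bool) (ξ : ℝ × ℝ) :
    |psiLP χ Θ n σ ξ| ≤ 1 := by
  obtain ⟨-, -, -, h3⟩ := hχ
  unfold psiLP
  have p := Θ.mem_Icc_p ξ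
  split_ifs with h1 h2
  · have := h3 (en ξ)
    rw [abs_le]; constructor <;> linarith [this.1, this.2]
  · rw [abs_mul]
    refine mul_le_one₀ ?_ (abs_nonneg _) ?_
    · rw [abs_le]; constructor <;> linarith [p.1, p.2]
    · have a := h3 ((2 : ℝ) ^ (-(n : ℤ)) * en ξ)
      have b := h3 ((2 : ℝ) ^ (-(n : ℤ) + 1) * en ξ)
      rw [abs_le]; constructor <;> linarith [a.1, a.2, b.1, b.2]
  · rw [abs_mul, Θ.phim_def]
    refine mul_le_one₀ ?_ (abs_nonneg _) ?_
    · rw [abs_le]; constructor <;> linarith [p.1, p.2]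
    · have a := h3 ((2 : ℝ) ^ (-(n : ℤ)) * en ξ)
      have b := h3 ((2 : ℝ) ^ (-(n : ℤ) + 1) * en ξ)
      rw [abs_le]; constructor <;> linarith [a.1, a.2, b.1, b.2]

lemma psi_meas {χ : ℝ → ℝ} (hχ : ChiOK χ) (Θ : Polarization) (n : ℕ) (σ : Bool) :
    Measurable (psiLP χ Θ n σ) := by
  have c := hχ.1.continuous
  have ce := continuous_en
  have mp : Measurable Θ.phip := by
    refine measurable_of_continuousOn_compl_singleton 0 ?_
    exact Θ.smooth_p.continuousOn
  have mm : Measurable Θ.phim := by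
    have : Θ.phim = fun v => 1 - Θ.phip v := funext Θ.phim_def
    rw [this]
    exact measurable_const.sub mp
  have e : psiLP χ Θ n σ = fun ξ => if n = 0 then χ (en ξ) / 2
    else (if σ then Θ.phip ξ else Θ.phim ξ) *
    (χ ((2 : ℝ) ^ (-(n : ℤ)) * en ξ) - χ ((2 : ℝ) ^ (-(n : ℤ) + 1) * en ξ)) := rfl
  rw [e]
  split_ifs with h1 h2
  · exact (by fun_prop : Continuous fun ξ => χ (en ξ) / 2).measurable
  · refine mp.mul (Continuous.measurable ?_)
    fun_prop
  · refine mm.mul (Continuous.measurable ?_)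
    fun_prop

/-- the transposed derivative as a linear map -/
def transL (A : (ℝ × ℝ) →L[ℝ] (ℝ × ℝ)) : (ℝ × ℝ) →ₗ[ℝ] (ℝ × ℝ) where
  toFun := transApp A
  map_add' x y := by
    simp only [transApp, Prod.fst_add, Prod.snd_add, Prod.mk_add_mk]
    congr 1 <;> ring
  map_smul' c x := by
    simp only [transApp, Prod.smul_fst, Prod.smul_snd, smul_eq_mul, RingHom.id_apply, Prod.smul_mk]
    congr 1 <;> ring

lemma transApp_cont (A : (ℝ × ℝ) →L[ℝ] (ℝ × ℝ)) : Continuous (transApp A) := by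
  unfold transApp; fun_prop

lemma transApp_open {A : (ℝ × ℝ) →L[ℝ] (ℝ × ℝ)} {c : ℝ} (hc : 0 < c)
    (h : ∀ v, c * en v ≤ en (transApp A v)) : IsOpenMap (transApp A) := by
  have hinj : Function.Injective (transL A) := by
    rw [injective_iff_map_eq_zero]
    intro v hv
    by_contra h0
    have h1 := h v
    have h2 : transApp A v = 0 := hv
    rw [h2, en_zero] at h1
    have := mul_pos hc (en_pos h0)
    linarith
  exact (LinearEquiv.ofInjectiveEndo (transL A) hinj).toContinuousLinearEquiv.toHomeomorph.isOpenMap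

lemma z2 {a b : ℤ} (h : a ≤ b) : (2 : ℝ) ^ a ≤ (2 : ℝ) ^ b := zpow_le_zpow_right₀ (by norm_num) h

lemma z2lt {a b : ℤ} (h : a < b) : (2 : ℝ) ^ a < (2 : ℝ) ^ b := zpow_lt_zpow_right₀ (by norm_num) h

lemma geom {χ : ℝ → ℝ} (hχ : ChiOK χ) (Θ Θ' : Polarization) (K : Set (ℝ × ℝ)) (S : ℝ × ℝ → ℝ × ℝ)
    (hcs : ∀ ζ ∈ K, Csub (transApp (fderiv ℝ S ζ) '' (Set.univ \ Θ.Cp)) Θ'.Cm)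
    (μ ν : ℤ)
    (hμ : ∀ x ∈ K, ∀ ξ : ℝ × ℝ,
      (2 : ℝ) ^ (-μ + 6) * en ξ ≤ en (transApp (fderiv ℝ S x) ξ) ∧
        en (transApp (fderiv ℝ S x) ξ) ≤ (2 : ℝ) ^ (μ - 6) * en ξ)
    (hΛ₁ : (2 : ℝ) ^ (ν - 1) < LambdaS K S Θ') (hΛ₂ : LambdaS K S Θ' ≤ (2 : ℝ) ^ ν) :
    ∃ P : Set ((ℝ × ℝ) × (ℝ × ℝ)), IsCompact P ∧
      (∀ z ∈ P, ∀ w ∈ K, transApp (fderiv ℝ S w) z.1 ≠ z.2) ∧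
      ∀ (m n : ℕ) (τ σ : Bool), ¬ Hook μ ν m τ n σ → ((max m n : ℕ) : ℤ) ≤ μ ∨
        ∀ ξ ζ, psiLP χ Θ m τ ξ ≠ 0 → psiLP χ Θ' n σ ζ ≠ 0 →
          ((((2 : ℝ) ^ (max m n))⁻¹ • ξ, ((2 : ℝ) ^ (max m n))⁻¹ • ζ) : (ℝ × ℝ) × (ℝ × ℝ)) ∈ P := by
  -- K is nonempty
  have hKne : K.Nonempty := by
    by_contra hK
    rw [Set.not_nonempty_iff_eq_empty] at hK
    have : LambdaS K S Θ' = 0 := by simp [LambdaS, hK]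
    rw [this] at hΛ₁
    exact absurd hΛ₁ (not_lt.mpr (by positivity))
  have hμ6 : 6 ≤ μ := by
    obtain ⟨w, hw⟩ := hKne
    have h := hμ w hw (1, 0)
    have e1 : en (1, 0) = 1 := by simp [en]
    rw [e1, mul_one, mul_one] at h
    have := (zpow_le_zpow_iff_right₀ (by norm_num : (1 : ℝ) < 2)).mp (h.1.trans h.2)
    omega
  have hLam : ∀ w ∈ K, ∀ v : ℝ × ℝ, transApp (fderiv ℝ S w) v ∈ closure (Θ'.Cmᶜ) →
      en (transApp (fderiv ℝ S w) v) ≤ (2 : ℝ) ^ ν * en v := by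
    intro w hw v hv
    have hb : ∀ v, transApp (fderiv ℝ S w) v ∈ Θ'.Cmᶜ → en (transApp (fderiv ℝ S w) v) ≤ (2 : ℝ) ^ ν * en v := by
      intro v hv
      by_cases h0 : v = 0
      · have := (hμ w hw v).2
        rw [h0, en_zero] at this ⊢
        simpa using this
      · have hp := en_pos h0
        have : en (transApp (fderiv ℝ S w) v) / en v ≤ LambdaS K S Θ' := by
          refine le_csSup ⟨(2 : ℝ) ^ (μ - 6), ?_⟩ ⟨w, hw, v, hv, rfl⟩
          rintro c ⟨w', hw', v', -, rfl⟩
          exact div_le_of_le_mul₀ (en_nonneg _) (by positivity) (hμ w' hw' v').2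
        rw [← div_le_iff₀ hp]
        exact this.trans hΛ₂
    have ho : IsOpenMap (transApp (fderiv ℝ S w)) :=
      transApp_open (c := (2 : ℝ) ^ (-μ + 6)) (by positivity) (fun v => (hμ w hw v).1)
    have hmem : v ∈ closure (transApp (fderiv ℝ S w) ⁻¹' Θ'.Cmᶜ) :=
      ho.preimage_closure_subset_closure_preimage hv
    have hcl : IsClosed {v | en (transApp (fderiv ℝ S w) v) ≤ (2 : ℝ) ^ ν * en v} :=
      isClosed_le (continuous_en.comp (transApp_cont _)) (continuous_const.mul continuous_en)
    exact closure_minimal (fun v hv => hb v hv) hcl hmem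
  let e1 : (ℝ × ℝ) × (ℝ × ℝ) → ℝ := fun z => en z.1
  let e2 : (ℝ × ℝ) × (ℝ × ℝ) → ℝ := fun z => en z.2
  have c1 : Continuous e1 := continuous_en.comp continuous_fst
  have c2 : Continuous e2 := continuous_en.comp continuous_snd
  let B : Set ((ℝ × ℝ) × (ℝ × ℝ)) := {z | e1 z ≤ 2 ^ (1 : ℤ)} ∩ {z | e2 z ≤ 2 ^ (1 : ℤ)}
  let Pa : Set ((ℝ × ℝ) × (ℝ × ℝ)) := {z | 2 ^ (-1 : ℤ) ≤ e1 z} ∩ {z | e2 z ≤ 2 ^ (-μ)}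
  let Pb : Set ((ℝ × ℝ) × (ℝ × ℝ)) := {z | 2 ^ (-1 : ℤ) ≤ e2 z} ∩ {z | e1 z ≤ 2 ^ (-μ)}
  let Pd : Set ((ℝ × ℝ) × (ℝ × ℝ)) := {z | 2 ^ (-μ - 1) ≤ e2 z} ∩
    (Prod.fst ⁻¹' closure (Θ.Cpᶜ) ∩ Prod.snd ⁻¹' closure (Θ'.Cmᶜ))
  let Pc : Set ((ℝ × ℝ) × (ℝ × ℝ)) := {z | 2 ^ (-μ - 1) ≤ e2 z} ∩
    ({z | 2 ^ (ν + 5) * e1 z ≤ e2 z} ∩ Prod.snd ⁻¹' closure (Θ'.Cmᶜ))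
  have ge : ∀ (c : ℝ) (e : (ℝ × ℝ) × (ℝ × ℝ) → ℝ), Continuous e → IsClosed {z | c ≤ e z} := fun c e he =>
    isClosed_le continuous_const he
  have le : ∀ (c : ℝ) (e : (ℝ × ℝ) × (ℝ × ℝ) → ℝ), Continuous e → IsClosed {z | e z ≤ c} := fun c e he =>
    isClosed_le he continuous_const
  refine ⟨B ∩ (Pa ∪ Pb ∪ Pd ∪ Pc), ?_, ?_, ?_⟩
  · refine IsCompact.of_isClosed_subset (isCompact_closedBall 0 2) ?_ ?_
    · refine ((le _ _ c1).inter (le _ _ c2)).inter (((IsClosed.union ?_ ?_).union ?_).union ?_)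
      · exact (ge _ _ c1).inter (le _ _ c2)
      · exact (ge _ _ c2).inter (le _ _ c1)
      · exact (ge _ _ c2).inter ((isClosed_closure.preimage continuous_fst).inter (isClosed_closure.preimage continuous_snd))
      · exact (ge _ _ c2).inter ((isClosed_le (continuous_const.mul c1) c2).inter (isClosed_closure.preimage continuous_snd))
    · rintro z ⟨⟨h1, h2⟩, -⟩
      simp only [mem_closedBall_zero_iff, Prod.norm_def (x := z)]
      simp only [zpow_one, mem_ofPred_eq] at h1 h2
      exact max_le ((norm_le_en _).trans h1) ((norm_le_en _).trans h2)
  · rintro ⟨p, q⟩ ⟨-, hz⟩ w hw heq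
    simp only at heq
    obtain ⟨m1, m2⟩ := hμ w hw p
    rw [heq] at m1 m2
    rcases hz with ((⟨h1, h2⟩ | ⟨h1, h2⟩) | ⟨h1, h2, h3⟩) | ⟨h1, h2, h3⟩
    · change 2 ^ (-1 : ℤ) ≤ en p at h1
      change en q ≤ 2 ^ (-μ) at h2
      have : (2 : ℝ) ^ (-μ + 6) * 2 ^ (-1 : ℤ) ≤ 2 ^ (-μ) := by
        refine le_trans ?_ (m1.trans h2)
        gcongr
      rw [← zpow_add₀ two_ne_zero] at this
      exact absurd this (not_le.mpr (z2lt (by omega)))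
    · change 2 ^ (-1 : ℤ) ≤ en q at h1
      change en p ≤ 2 ^ (-μ) at h2
      have : (2 : ℝ) ^ (-1 : ℤ) ≤ 2 ^ (μ - 6) * 2 ^ (-μ) := by
        refine (h1.trans m2).trans ?_
        gcongr
      rw [← zpow_add₀ two_ne_zero] at this
      exact absurd this (not_le.mpr (z2lt (by omega)))
    · change 2 ^ (-μ - 1) ≤ en q at h1
      change p ∈ closure (Θ.Cpᶜ) at h2
      change q ∈ closure (Θ'.Cmᶜ) at h3
      have hq0 : q ≠ 0 := by
        rintro rfl
        rw [en_zero] at h1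
        exact absurd h1 (not_le.mpr (by positivity))
      have hq : q ∈ closure (transApp (fderiv ℝ S w) '' (Set.univ \ Θ.Cp)) := by
        rw [← heq, ← Set.compl_eq_univ_sdiff]
        exact image_closure_subset_closure_image (transApp_cont _) (mem_image_of_mem _ h2)
      have := hcs w hw ⟨hq, hq0⟩
      rw [closure_compl] at h3
      exact h3 this
    · change 2 ^ (-μ - 1) ≤ en q at h1
      change 2 ^ (ν + 5) * en p ≤ en q at h2
      change q ∈ closure (Θ'.Cmᶜ) at h3
      have h4 := hLam w hw p (by rw [heq]; exact h3)
      rw [heq] at h4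
      have hq : 0 < en q := lt_of_lt_of_le (by positivity) h1
      rw [zpow_add₀ two_ne_zero] at h2
      norm_num at h2
      nlinarith
  · intro m n τ σ hh
    by_cases hs : ((max m n : ℕ) : ℤ) ≤ μ
    · exact Or.inl hs
    right
    intro ξ ζ hξ hζ
    set N := max m n with hN
    have hNm : m ≤ N := le_max_left _ _
    have hNn : n ≤ N := le_max_right _ _
    have hNe : N = m ∨ N = n := by
      rcases max_choice m n with h | h
      · left; exact h
      · right; exact h
    have hM : ((2 : ℝ) ^ N)⁻¹ = (2 : ℝ) ^ (-(N : ℤ)) := by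
      rw [zpow_neg, zpow_natCast]
    have hMp : (0 : ℝ) < ((2 : ℝ) ^ N)⁻¹ := by positivity
    have esc : ∀ v : ℝ × ℝ, en (((2 : ℝ) ^ N)⁻¹ • v) = (2 : ℝ) ^ (-(N : ℤ)) * en v := by
      intro v
      rw [en_smul, abs_of_pos hMp, hM]
    have up : ∀ (v : ℝ × ℝ) (a : ℤ), en v ≤ 2 ^ a → en (((2 : ℝ) ^ N)⁻¹ • v) ≤ 2 ^ (a - N) := by
      intro v a h
      rw [esc, sub_eq_add_neg, zpow_add₀ two_ne_zero, mul_comm]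
      gcongr
    have lo : ∀ (v : ℝ × ℝ) (a : ℤ), 2 ^ a ≤ en v → 2 ^ (a - N) ≤ en (((2 : ℝ) ^ N)⁻¹ • v) := by
      intro v a h
      rw [esc, sub_eq_add_neg, zpow_add₀ two_ne_zero, mul_comm]
      gcongr
    have cc : ∀ (C : Set (ℝ × ℝ)), (∀ (c : ℝ) v, v ∈ C → c • v ∈ C) → ∀ v, v ∉ C → ((2 : ℝ) ^ N)⁻¹ • v ∈ Cᶜ := by
      intro C hC v hv hm
      apply hv
      have := hC ((2 : ℝ) ^ N) _ hm
      rwa [smul_inv_smul₀ (by positivity)] at this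
    have u1 := up _ _ (psi_up hχ Θ m τ hξ)
    have u2 := up _ _ (psi_up hχ Θ' n σ hζ)
    have l1 : 1 ≤ m → _ := fun hm => lo _ _ (psi_lo hχ Θ hm τ hξ)
    have l2 : 1 ≤ n → _ := fun hm => lo _ _ (psi_lo hχ Θ' hm σ hζ)
    refine ⟨⟨u1.trans (z2 (by omega)), u2.trans (z2 (by omega))⟩, ?_⟩
    by_cases ca : (n : ℤ) < m - μ
    · exact Or.inl (Or.inl (Or.inl ⟨(z2 (by omega)).trans (l1 (by omega)), u2.trans (z2 (by omega))⟩))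
    by_cases cb : (m : ℤ) + μ < n
    · exact Or.inl (Or.inl (Or.inr ⟨(z2 (by omega)).trans (l2 (by omega)), u1.trans (z2 (by omega))⟩))
    cases σ with
    | false => exact absurd (Or.inr ⟨rfl, by omega, by omega⟩) hh
    | true =>
      cases τ with
      | false =>
        have hm1 : 1 ≤ m := by omega
        have hn1 : 1 ≤ n := by omega
        refine Or.inl (Or.inr ⟨(z2 (by omega)).trans (l2 hn1), ?_, ?_⟩)
        · exact subset_closure (cc _ Θ.cone_p _ (psi_cone_m hχ Θ hm1 hξ))
        · exact subset_closure (cc _ Θ'.cone_m _ (psi_cone_p hχ Θ' hn1 hζ))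
      | true =>
        have hlt : max 0 ((m : ℤ) + ν + 6) < n := by
          by_contra hc
          exact hh (Or.inl ⟨rfl, rfl, by omega, by omega⟩)
        have hn1 : 1 ≤ n := by omega
        refine Or.inr ⟨(z2 (by omega)).trans (l2 hn1), ?_, ?_⟩
        · change (2 : ℝ) ^ (ν + 5) * en _ ≤ en _
          refine le_trans ?_ (l2 hn1)
          calc _ ≤ (2 : ℝ) ^ (ν + 5) * 2 ^ ((m : ℤ) + 1 - N) := by gcongr
            _ = 2 ^ (ν + 5 + ((m : ℤ) + 1 - N)) := by rw [← zpow_add₀ two_ne_zero]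
            _ ≤ _ := z2 (by omega)
        · exact subset_closure (cc _ Θ'.cone_m _ (psi_cone_p hχ Θ' hn1 hζ))

lemma det_ne {A : (ℝ × ℝ) →L[ℝ] (ℝ × ℝ)} (h : det2 A ≠ 0) : A.det ≠ 0 := by
  have : A.det = det2 A := by
    unfold ContinuousLinearMap.det
    rw [← LinearMap.det_toMatrix (Module.Basis.finTwoProd ℝ), Matrix.det_fin_two]
    simp [LinearMap.toMatrix_apply, det2]
    ring
  rwa [this]

lemma K_compact {η δ : ℝ} {K : Set (ℝ × ℝ)} (hK : IsClosed K) (hKR : K ⊆ Rset η δ) : IsCompact K := by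
  refine IsCompact.of_isClosed_subset ((isCompact_Icc (a := -η) (b := η)).prod (isCompact_Icc (a := δ) (b := 2 * δ))) hK ?_
  exact hKR.trans (Set.prod_mono Set.Ioo_subset_Icc_self Set.Ioo_subset_Icc_self)

lemma bilin (k : ℕ) (η δ : ℝ) (χ : ℝ → ℝ) (hχ : ChiOK χ)
    (Θ Θ' : Polarization) (K : Set (ℝ × ℝ)) (h : ℝ × ℝ → ℝ) (S : ℝ × ℝ → ℝ × ℝ)
    (hT : TransferHyp (k + 1) η δ Θ Θ' K h S)
    (μ ν : ℤ)
    (hμ : ∀ x ∈ K, ∀ ξ : ℝ × ℝ,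
      (2 : ℝ) ^ (-μ + 6) * en ξ ≤ en (transApp (fderiv ℝ S x) ξ) ∧
        en (transApp (fderiv ℝ S x) ξ) ≤ (2 : ℝ) ^ (μ - 6) * en ξ)
    (hΛ₁ : (2 : ℝ) ^ (ν - 1) < LambdaS K S Θ') (hΛ₂ : LambdaS K S Θ' ≤ (2 : ℝ) ^ ν) :
    ∃ C : ℝ, 0 ≤ C ∧ ∀ (m n : ℕ) (τ σ : Bool), ¬ Hook μ ν m τ n σ → ∀ f φ, Good f → Good φ →
      (∀ ξ, f ξ ≠ 0 → psiLP χ Θ m τ ξ ≠ 0) → (∀ ξ, φ ξ ≠ 0 → psiLP χ Θ' n σ (-ξ) ≠ 0) →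
      ‖TT S h f φ‖ * ((2 : ℝ) ^ (max m n)) ^ k ≤ C * nrm f * nrm φ := by
  obtain ⟨hKc, hKR, hh, hhK, ⟨U, hU, hKU, hSU, hinj, hdet⟩, hcs⟩ := hT
  have hK := K_compact hKc hKR
  obtain ⟨P, hP, hsep, hgeo⟩ := geom hχ Θ Θ' K S hcs μ ν hμ hΛ₁ hΛ₂
  obtain ⟨ρ, r1, r2, r3, r4⟩ := exists_cutoff hK hU hKU (k + 1)
  let S' : ℝ × ℝ → ℝ × ℝ := fun x => ρ x • S x
  have hS' : ContDiff ℝ (k + 1 : ℕ) S' := contDiff_cut hU r1 r3 hSU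
  have hc' : HasCompactSupport S' := r2.smul_right
  have heq : ∀ w ∈ K, S' =ᶠ[𝓝 w] S := by
    intro w hw
    filter_upwards [(eventually_nhdsSet_iff_forall.mp r4) w hw] with x hx
    simp [S', hx]
  have hfd : ∀ w ∈ K, fderiv ℝ S' w = fderiv ℝ S w := fun w hw => (heq w hw).fderiv_eq
  have hv : ∀ w ∈ K, S' w = S w := fun w hw => (heq w hw).eq_of_nhds
  have hinj' : InjOn S' K := by
    intro x hx y hy hxy
    rw [hv x hx, hv y hy] at hxy
    exact hinj (hKU hx) (hKU hy) hxy
  have hdet' : ∀ x ∈ K, (fderiv ℝ S' x).det ≠ 0 := by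
    intro x hx
    rw [hfd x hx]
    exact det_ne (hdet x (hKU hx))
  have hTT : ∀ f φ, TT S h f φ = TT S' h f φ := by
    intro f φ
    unfold TT
    congr 1
    ext w
    by_cases hw : w ∈ K
    · rw [hv w hw]
    · have : h w = 0 := by
        by_contra h0
        exact hw (hhK h0)
      simp [this]
  have hh' : ContDiff ℝ k h := by simpa using hh
  obtain ⟨A, hA, hCB⟩ := CB.of_compact hh' (HasCompactSupport.of_support_subset_isCompact hK hhK)
  have hne : ∀ z ∈ P, ∀ w ∈ K, ¬ (XX S' z.1 z.2 true w = 0 ∧ XX S' z.1 z.2 false w = 0) := by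
    rintro z hz w hw ⟨a, b⟩
    apply hsep z hz w hw
    simp only [XX, DSf, hfd w hw, bas, cmp] at a b
    simp only [if_true, Bool.false_eq_true, if_false] at a b
    refine Prod.ext ?_ ?_
    · simp only [transApp]; linarith
    · simp only [transApp]; linarith
  obtain ⟨C1, hC1, h1⟩ := cover hK hc' hinj' hdet' k hS' hCB hhK hP hne
  obtain ⟨C2, hC2, h2⟩ := zero_bound hK (hS'.of_le (by norm_cast; omega)) hinj' hdet'
  refine ⟨C1 + C2 * A * ((2 : ℝ) ^ μ.toNat) ^ k, by positivity, ?_⟩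
  intro m n τ σ hhook f φ hf hφ sf sφ
  have nf := nrm_nonneg f
  have nφ := nrm_nonneg φ
  rw [hTT]
  have hsplit : (C1 + C2 * A * ((2 : ℝ) ^ μ.toNat) ^ k) * nrm f * nrm φ =
    C1 * nrm f * nrm φ + C2 * A * nrm f * nrm φ * ((2 : ℝ) ^ μ.toNat) ^ k := by ring
  rw [hsplit]
  rcases hgeo m n τ σ hhook with hs | hs
  · have b := h2 A h hCB.abs_le hhK f φ hf hφ
    have : ‖TT S' h f φ‖ * ((2 : ℝ) ^ (max m n)) ^ k ≤ C2 * A * nrm f * nrm φ * ((2 : ℝ) ^ μ.toNat) ^ k := by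
      have hle : max m n ≤ μ.toNat := by omega
      gcongr
      norm_num
    have : 0 ≤ C1 * nrm f * nrm φ := by positivity
    linarith
  · have hb : ∀ (Θ : Polarization) (a : ℕ) (s : Bool) (ξ : ℝ × ℝ), a ≤ max m n → psiLP χ Θ a s ξ ≠ 0 → ‖ξ‖ ≤ 2 * 2 ^ (max m n) := by
      intro Θ a s ξ ha hx
      refine (norm_le_en ξ).trans ((psi_up hχ Θ a s hx).trans ?_)
      rw [zpow_add₀ two_ne_zero, zpow_natCast, zpow_one, mul_comm]
      gcongr
      norm_num
    have b := h1 (2 ^ (max m n)) (by positivity) f φ hf hφ (fun ξ hξ => hb Θ m τ ξ (le_max_left _ _) (sf ξ hξ))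
      (fun ξ hξ => by simpa using hb Θ' n σ (-ξ) (le_max_right _ _) (sφ ξ hξ))
      (fun ξ ζ hξ hζ => by simpa using hs ξ (-ζ) (sf ξ hξ) (sφ ζ hζ))
    have : 0 ≤ C2 * A * nrm f * nrm φ * ((2 : ℝ) ^ μ.toNat) ^ k := by positivity
    linarith

lemma norm_expI (t : ℝ) : ‖Complex.exp ((t : ℂ) * Complex.I)‖ = 1 := Complex.norm_exp_ofReal_mul_I t

lemma norm_FTexp (x ξ : ℝ × ℝ) :
    ‖Complex.exp (-(2 * Real.pi * (x.1 * ξ.1 + x.2 * ξ.2)) * Complex.I)‖ = 1 := by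
  have := norm_expI (-(2 * Real.pi * (x.1 * ξ.1 + x.2 * ξ.2)))
  push_cast at this
  exact this

lemma norm_iFTexp (x ξ : ℝ × ℝ) :
    ‖Complex.exp ((2 * Real.pi * (x.1 * ξ.1 + x.2 * ξ.2)) * Complex.I)‖ = 1 := by
  have := norm_expI ((2 * Real.pi * (x.1 * ξ.1 + x.2 * ξ.2)))
  push_cast at this
  exact this

lemma FT_bound (g : ℝ × ℝ → ℂ) (ξ : ℝ × ℝ) : ‖FT g ξ‖ ≤ ∫ x, ‖g x‖ := by
  unfold FT
  refine (norm_integral_le_integral_norm _).trans (le_of_eq ?_)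
  congr 1
  ext x
  rw [norm_mul, norm_FTexp, one_mul]

lemma FT_cont {g : ℝ × ℝ → ℂ} (hg : Integrable g volume) : Continuous (FT g) := by
  unfold FT
  refine continuous_of_dominated (bound := fun x => ‖g x‖) ?_ ?_ hg.norm ?_
  · intro ξ
    refine AEStronglyMeasurable.mul (Continuous.aestronglyMeasurable ?_) hg.1
    fun_prop
  · intro ξ
    refine Eventually.of_forall fun x => ?_
    rw [norm_mul, norm_FTexp, one_mul]
  · refine Eventually.of_forall fun x => ?_
    fun_prop

lemma good_ball (R : ℝ) : Good ((Metric.closedBall (0 : ℝ × ℝ) R).indicator fun _ => (1 : ℂ)) := by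
  refine ⟨?_, R, ?_⟩
  · exact memLp_indicator_const 2 measurableSet_closedBall 1 (Or.inr measure_closedBall_lt_top.ne)
  · intro ξ h
    by_contra hc
    apply h
    rw [indicator_of_notMem]
    simpa using hc

lemma good_psi {χ : ℝ → ℝ} (hχ : ChiOK χ) (Θ : Polarization) (n : ℕ) (σ : Bool) {g : ℝ × ℝ → ℂ}
    (hg : Integrable g volume) : Good (fun ξ => (psiLP χ Θ n σ ξ : ℂ) * FT g ξ) := by
  have h := (good_ball ((2 : ℝ) ^ ((n : ℤ) + 1))).mul (a := fun ξ => (psiLP χ Θ n σ ξ : ℂ) * FT g ξ)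
    (c := ∫ x, ‖g x‖) ?_ ?_
  · convert h using 1
    ext ξ
    by_cases h0 : psiLP χ Θ n σ ξ = 0
    · simp [h0]
    · rw [indicator_of_mem, mul_one]
      simpa using (norm_le_en ξ).trans (psi_up hχ Θ n σ h0)
  · exact (Complex.measurable_ofReal.comp (psi_meas hχ Θ n σ)).aestronglyMeasurable.mul (FT_cont hg).aestronglyMeasurable
  · intro ξ _
    rw [norm_mul, Complex.norm_real, Real.norm_eq_abs]
    calc _ ≤ 1 * (∫ x, ‖g x‖) := by
          gcongr
          · exact psi_abs hχ Θ n σ ξ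
          · exact FT_bound g ξ
      _ = _ := one_mul _

lemma nrm_sq {X : ℝ × ℝ → ℂ} (hX : MemLp X 2 volume) : ∫ ξ, ‖X ξ‖ ^ 2 = nrm X ^ 2 := by
  unfold nrm
  rw [hX.eLpNorm_eq_integral_rpow_norm (by norm_num) (by norm_num)]
  have h0 : 0 ≤ ∫ ξ, ‖X ξ‖ ^ 2 := integral_nonneg fun ξ => by positivity
  rw [ENNReal.toReal_ofReal (by positivity)]
  simp only [ENNReal.toReal_ofNat, Real.rpow_ofNat]
  rw [← Real.rpow_natCast, ← Real.rpow_mul h0]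
  norm_num

lemma flip_good {X : ℝ × ℝ → ℂ} (hX : Good X) :
    Good (fun ξ => (starRingEnd ℂ) (X (-ξ))) ∧ nrm (fun ξ => (starRingEnd ℂ) (X (-ξ))) = nrm X := by
  have mp : MeasurePreserving (Neg.neg : ℝ × ℝ → ℝ × ℝ) volume volume := Measure.measurePreserving_neg volume
  have e : eLpNorm (fun ξ => (starRingEnd ℂ) (X (-ξ))) 2 volume = eLpNorm X 2 volume := by
    rw [← eLpNorm_comp_measurePreserving hX.memLp.1 mp]
    refine eLpNorm_congr_norm_ae (Eventually.of_forall fun ξ => ?_)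
    simp
  have m : AEStronglyMeasurable (fun ξ => (starRingEnd ℂ) (X (-ξ))) volume :=
    Complex.continuous_conj.comp_aestronglyMeasurable (hX.memLp.1.comp_measurePreserving mp)
  refine ⟨⟨⟨m, ?_⟩, ?_⟩, ?_⟩
  · rw [e]; exact hX.memLp.2
  · obtain ⟨R, hR⟩ := hX.bdd
    refine ⟨R, fun ξ h => ?_⟩
    have := hR (-ξ) (by
      intro h0
      apply h
      simp [h0])
    simpa using this
  · unfold nrm; rw [e]

lemma fubini {w φ : ℝ × ℝ → ℂ} (hw : Integrable w volume) (hφ : Integrable φ volume) :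
    ∫ x, w x * invFT φ x = ∫ ζ, φ ζ * FT w (-ζ) := by
  have hIntg : Integrable (fun z : (ℝ × ℝ) × (ℝ × ℝ) =>
      Complex.exp ((2 * Real.pi * (z.1.1 * z.2.1 + z.1.2 * z.2.2)) * Complex.I) * (w z.1 * φ z.2)) (volume.prod volume) := by
    refine (hw.mul_prod hφ).bdd_mul (c := 1) (Continuous.aestronglyMeasurable (by fun_prop)) ?_
    exact Eventually.of_forall fun z => (norm_iFTexp z.1 z.2).le
  calc _ = ∫ x, ∫ ζ, Complex.exp ((2 * Real.pi * ((x : ℝ × ℝ).1 * (ζ : ℝ × ℝ).1 + x.2 * ζ.2)) * Complex.I) * (w x * φ ζ) := by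
        congr 1; ext x
        unfold invFT
        rw [← integral_const_mul]
        congr 1; ext ζ; ring
    _ = ∫ ζ, ∫ x, Complex.exp ((2 * Real.pi * ((x : ℝ × ℝ).1 * (ζ : ℝ × ℝ).1 + x.2 * ζ.2)) * Complex.I) * (w x * φ ζ) :=
        integral_integral_swap hIntg
    _ = _ := by
        congr 1; ext ζ
        unfold FT
        rw [← integral_const_mul]
        congr 1; ext x
        simp only [Prod.fst_neg, Prod.snd_neg, Complex.ofReal_neg]
        have : -(2 * (π : ℂ) * (x.1 * -(ζ.1 : ℂ) + x.2 * -(ζ.2 : ℂ))) = 2 * (π : ℂ) * (x.1 * ζ.1 + x.2 * ζ.2) := by ring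
        rw [this]
        ring

lemma duality {χ : ℝ → ℝ} (hχ : ChiOK χ) (Θ' : Polarization) (n : ℕ) (σ : Bool) (K : Set (ℝ × ℝ))
    (h : ℝ × ℝ → ℝ) (S : ℝ × ℝ → ℝ × ℝ) (hhK : support h ⊆ K) {f : ℝ × ℝ → ℂ}
    (hw : Integrable (Lop K h S (invFT f)) volume) :
    ∃ φ, Good φ ∧ (∀ ξ, φ ξ ≠ 0 → psiLP χ Θ' n σ (-ξ) ≠ 0) ∧
      nrm φ ≤ nrm (fun ξ => (psiLP χ Θ' n σ ξ : ℂ) * FT (Lop K h S (invFT f)) ξ) ∧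
      ‖TT S h f φ‖ = nrm (fun ξ => (psiLP χ Θ' n σ ξ : ℂ) * FT (Lop K h S (invFT f)) ξ) ^ 2 := by
  set w := Lop K h S (invFT f) with hwdef
  set X : ℝ × ℝ → ℂ := fun ξ => (psiLP χ Θ' n σ ξ : ℂ) * FT w ξ with hX
  have gX : Good X := good_psi hχ Θ' n σ hw
  obtain ⟨gY, nY⟩ := flip_good gX
  have bd : ∀ ξ, ‖((psiLP χ Θ' n σ (-ξ) : ℝ) : ℂ)‖ ≤ 1 := fun ξ => by
    rw [Complex.norm_real]; exact psi_abs hχ Θ' n σ (-ξ)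
  have ms : AEStronglyMeasurable (fun ξ => ((psiLP χ Θ' n σ (-ξ) : ℝ) : ℂ)) volume :=
    (Complex.measurable_ofReal.comp ((psi_meas hχ Θ' n σ).comp measurable_neg)).aestronglyMeasurable
  set φ : ℝ × ℝ → ℂ := fun ξ => (psiLP χ Θ' n σ (-ξ) : ℂ) * (starRingEnd ℂ) (X (-ξ)) with hφ
  have gφ : Good φ := gY.mul ms (fun ξ _ => bd ξ)
  refine ⟨φ, gφ, ?_, ?_, ?_⟩
  · intro ξ hξ h0
    apply hξ
    simp [hφ, h0]
  · have := gY.nrm_mul (a := fun ξ => ((psiLP χ Θ' n σ (-ξ) : ℝ) : ℂ)) zero_le_one (fun ξ _ => bd ξ)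
    rwa [one_mul, nY] at this
  · have e1 : TT S h f φ = ∫ x, w x * invFT φ x := by
      unfold TT
      congr 1; ext x
      simp only [hwdef, Lop]
      by_cases hx : x ∈ K
      · rw [indicator_of_mem hx]
      · have : h x = 0 := by
          by_contra h0
          exact hx (hhK h0)
        simp [this, hx]
    have e2 : ∫ ζ, φ ζ * FT w (-ζ) = ∫ ζ, ((‖X ζ‖ ^ 2 : ℝ) : ℂ) := by
      rw [← integral_neg_eq_self (fun ζ => ((‖X ζ‖ ^ 2 : ℝ) : ℂ))]
      congr 1; ext ζ
      rw [← Complex.normSq_eq_norm_sq, Complex.normSq_eq_conj_mul_self]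
      simp only [hφ, hX]
      ring
    rw [e1, fubini hw gφ.integrable, e2, integral_complex_ofReal, nrm_sq gX.memLp, Complex.norm_real,
      Real.norm_of_nonneg (by positivity)]

end helpers

/-- Lemma B.1. In the transfer-operator setting, with `μ` and `ν` as
described, there is `C` such that for all `u ∈ C^r(R)` and all `(m,τ) ↪̸ (n,σ)`:
`‖ψ_{Θ',n,σ}(D)(L(u_{Θ,m,τ}))‖_{L²} ≤ C·2^{-(r-1)max{m,n}}·‖u_{Θ,m,τ}‖_{L²}`. -/
theorem statement12 (r : ℕ) (hr : 3 ≤ r) (η δ ε : ℝ) (hη : 0 < η) (hδ : 0 < δ)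
    (hε₁ : 0 < ε) (hε₂ : ε < 1 / 2) (χ : ℝ → ℝ) (hχ : ChiOK χ)
    (Θ Θ' : Polarization) (K : Set (ℝ × ℝ)) (h : ℝ × ℝ → ℝ) (S : ℝ × ℝ → ℝ × ℝ)
    (hT : TransferHyp r η δ Θ Θ' K h S)
    (μ ν : ℤ)
    (hμ : ∀ x ∈ K, ∀ ξ : ℝ × ℝ,
      (2 : ℝ) ^ (-μ + 6) * en ξ ≤ en (transApp (fderiv ℝ S x) ξ) ∧
        en (transApp (fderiv ℝ S x) ξ) ≤ (2 : ℝ) ^ (μ - 6) * en ξ)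
    (hν : ν ≤ μ - 6)
    (hΛ₁ : (2 : ℝ) ^ (ν - 1) < LambdaS K S Θ') (hΛ₂ : LambdaS K S Θ' ≤ (2 : ℝ) ^ ν) :
    ∃ C : ℝ≥0, ∀ u : ℝ × ℝ → ℂ, CrSupp r η δ u →
      ∀ (m n : ℕ) (τ σ : Bool), ¬ Hook μ ν m τ n σ →
        eLpNorm (psiD χ Θ' n σ (Lop K h S (psiD χ Θ m τ u))) 2 volume ≤
          C * ENNReal.ofReal ((2 : ℝ) ^ (-((r : ℤ) - 1) * (max m n : ℤ))) *
            eLpNorm (psiD χ Θ m τ u) 2 volume := by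
  obtain ⟨k, rfl⟩ : ∃ k, r = k + 1 := ⟨r - 1, by omega⟩
  obtain ⟨C, hC, hb⟩ := bilin k η δ χ hχ Θ Θ' K h S hT μ ν hμ hΛ₁ hΛ₂
  obtain ⟨hKc, hKR, hh, hhK, ⟨U, hU, hKU, hSU, hinj, hdet⟩, hcs⟩ := hT
  have hK := K_compact hKc hKR
  refine ⟨C.toNNReal, ?_⟩
  intro u hu m n τ σ hhook
  have iu : Integrable u volume := by
    refine hu.1.continuous.integrable_of_hasCompactSupport ?_
    refine HasCompactSupport.of_support_subset_isCompact
      ((isCompact_Icc (a := -η) (b := η)).prod (isCompact_Icc (a := δ) (b := 2 * δ))) ?_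
    exact hu.2.trans (Set.prod_mono Set.Ioo_subset_Icc_self Set.Ioo_subset_Icc_self)
  set f : ℝ × ℝ → ℂ := fun ξ => (psiLP χ Θ m τ ξ : ℂ) * FT u ξ with hf
  have gf : Good f := good_psi hχ Θ m τ iu
  have hv : psiD χ Θ m τ u = invFT f := rfl
  rw [hv]
  have hw : Integrable (Lop K h S (invFT f)) volume := by
    unfold Lop
    rw [integrable_indicator_iff hKc.measurableSet]
    refine ContinuousOn.integrableOn_compact hK ?_
    refine ContinuousOn.mul (Complex.continuous_ofReal.comp hh.continuous).continuousOn ?_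
    exact gf.continuous.comp_continuousOn (hSU.continuousOn.mono hKU)
  obtain ⟨φ, gφ, sφ, nφ, eφ⟩ := duality hχ Θ' n σ K h S hhK hw
  set X : ℝ × ℝ → ℂ := fun ξ => (psiLP χ Θ' n σ ξ : ℂ) * FT (Lop K h S (invFT f)) ξ with hX
  have gX : Good X := good_psi hχ Θ' n σ hw
  have hv2 : psiD χ Θ' n σ (Lop K h S (invFT f)) = invFT X := rfl
  rw [hv2, eLpNorm_invFT X gX.integrable gX.memLp, eLpNorm_invFT f gf.integrable gf.memLp]
  have key := hb m n τ σ hhook f φ gf gφ (fun ξ hξ h0 => hξ (by simp [hf, h0])) sφ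
  rw [eφ] at key
  have n1 := nrm_nonneg f
  have n2 := nrm_nonneg X
  have hM : (0 : ℝ) < ((2 : ℝ) ^ (max m n)) ^ k := by positivity
  have key2 : nrm X * ((2 : ℝ) ^ (max m n)) ^ k ≤ C * nrm f := by
    have h1 : nrm X ^ 2 * ((2 : ℝ) ^ (max m n)) ^ k ≤ C * nrm f * nrm X := key.trans (by gcongr)
    rcases n2.eq_or_lt with h0 | h0
    · rw [← h0]
      simp only [zero_mul]
      positivity
    · nlinarith
  have hz : (2 : ℝ) ^ (-(((k + 1 : ℕ) : ℤ) - 1) * (max m n : ℤ)) = (((2 : ℝ) ^ (max m n)) ^ k)⁻¹ := by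
    rw [← pow_mul, ← zpow_natCast, ← zpow_neg]
    congr 1
    push_cast
    ring
  rw [hz]
  have key3 : nrm X ≤ C * (((2 : ℝ) ^ (max m n)) ^ k)⁻¹ * nrm f := by
    calc nrm X = nrm X * ((2 : ℝ) ^ (max m n)) ^ k * (((2 : ℝ) ^ (max m n)) ^ k)⁻¹ := by field_simp
      _ ≤ C * nrm f * (((2 : ℝ) ^ (max m n)) ^ k)⁻¹ := by gcongr
      _ = _ := by ring
  have eX : eLpNorm X 2 volume = ENNReal.ofReal (nrm X) := (ENNReal.ofReal_toReal gX.memLp.2.ne).symm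
  have ef : eLpNorm f 2 volume = ENNReal.ofReal (nrm f) := (ENNReal.ofReal_toReal gf.memLp.2.ne).symm
  have eC : ((C.toNNReal : ℝ≥0) : ℝ≥0∞) = ENNReal.ofReal C := rfl
  rw [eX, ef, eC, ← ENNReal.ofReal_mul hC, ← ENNReal.ofReal_mul (by positivity)]
  exact ENNReal.ofReal_le_ofReal key3

end AngleMult
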